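/- arXiv:1106.0928 — 3 statements merged into one kernel-verified Lean document; each statement's English description precedes it below -/
import Mathlib

section
/- For any two ℝ-linear connections ∇⁰, ∇¹ of L on E and every p ≥ 1, the difference ch_p(∇¹) − ch_p(∇⁰) is d_ρ-exact: there exists a C-valued ℝ-linear (2p−1)-form η on L with d_ρ η = ch_p(∇¹) − ch_p(∇⁰). Hence the Chern character class [ch_p(∇)] does not depend on the choice of the ℝ-linear connection ∇. -/
open Module

/-- The trace over `C` of an `ℝ`-linear endomorphism of `E` whose underlying
function happens to be `C`-linear (and `0` otherwise). -/
noncomputable def trR (C : Type*) {E : Type*} [CommRing C] [AddCommGroup E]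
    [Module ℝ E] [Module C E] (e : E →ₗ[ℝ] E) : C :=
  letI := Classical.propDecidable
  if h : ∃ g : E →ₗ[C] E, ⇑g = ⇑e then LinearMap.trace C E h.choose else 0

/-- An ℝ-linear connection of the Lie algebra `L` (with anchor `ρ`) on the `C`-module `E`. -/
def IsConn {L C E : Type*} [LieRing L] [LieAlgebra ℝ L] [CommRing C] [Algebra ℝ C]
    [AddCommGroup E] [Module ℝ E] [Module C E]
    (ρ : L →ₗ[ℝ] Derivation ℝ C C) (D : L →ₗ[ℝ] Module.End ℝ E) : Prop :=
  ∀ (a : L) (f : C) (e : E), D a (f • e) = f • D a e + ρ a f • e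

/-- The curvature of an ℝ-linear map `D : L →ₗ[ℝ] End ℝ E`. -/
def curv {L E : Type*} [LieRing L] [LieAlgebra ℝ L] [AddCommGroup E] [Module ℝ E]
    (D : L →ₗ[ℝ] Module.End ℝ E) (a b : L) : Module.End ℝ E :=
  D a * D b - D b * D a - D ⁅a, b⁆

/-- The curvature as an `End ℝ E`-valued 2-form. -/
def curv2 {L E : Type*} [LieRing L] [LieAlgebra ℝ L] [AddCommGroup E] [Module ℝ E]
    (D : L →ₗ[ℝ] Module.End ℝ E) : (Fin 2 → L) → Module.End ℝ E :=
  fun a => curv D (a 0) (a 1)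

/-- The Chevalley–Eilenberg style differential of a `V`-valued `n`-form on `L`,
with respect to an action `act` of `L` on `V`:
`(dω)(a₁,…,a_{n+1}) = Σᵢ (−1)^{i+1} act(aᵢ)(ω(a₁,…,âᵢ,…)) +
  Σ_{i<j} (−1)^{i+j} ω(⁅aᵢ,aⱼ⁆, a₁,…,âᵢ,…,âⱼ,…)`. -/
def dGen {L V : Type*} [LieRing L] [AddCommGroup V] (act : L → V → V) :
    {n : ℕ} → ((Fin n → L) → V) → ((Fin (n + 1) → L) → V)
  | 0, ω, a => act (a 0) (ω Fin.elim0)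
  | (m + 1), ω, a =>
      (∑ i : Fin (m + 2), (-1 : ℤ) ^ (i : ℕ) • act (a i) (ω (fun k => a (i.succAbove k)))) +
      ∑ i : Fin (m + 2), ∑ j : Fin (m + 2),
        if h : (i : ℕ) < (j : ℕ) then
          (-1 : ℤ) ^ ((i : ℕ) + (j : ℕ)) • ω (Fin.cons ⁅a i, a j⁆
            (fun k : Fin m => a (j.succAbove
              ((⟨(i : ℕ), by have := j.isLt; omega⟩ : Fin (m + 1)).succAbove k))))
        else 0

/-- The differential `d_ρ` on `C`-valued ℝ-linear forms on `L`. -/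
def dRho {L C : Type*} [LieRing L] [LieAlgebra ℝ L] [CommRing C] [Algebra ℝ C]
    (ρ : L →ₗ[ℝ] Derivation ℝ C C) {n : ℕ} (ω : (Fin n → L) → C) :
    (Fin (n + 1) → L) → C :=
  dGen (fun a c => ρ a c) ω

/-- The differential `d^{∇̄}` on `End ℝ E`-valued ℝ-linear forms on `L`,
where `∇̄_a = [∇_a, ·]`. -/
def dEnd {L E : Type*} [LieRing L] [LieAlgebra ℝ L] [AddCommGroup E] [Module ℝ E]
    (D : L →ₗ[ℝ] Module.End ℝ E) {n : ℕ} (ω : (Fin n → L) → Module.End ℝ E) :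
    (Fin (n + 1) → L) → Module.End ℝ E :=
  dGen (fun a φ => D a * φ - φ * D a) ω

/-- The wedge product (with composition as multiplication of values) of
`End ℝ E`-valued forms:
`(ω∧η)(a₁,…,a_{m+n}) = (1/(m!·n!)) Σ_{τ} sgn τ · ω(a_{τ(1)},…) ∘ η(a_{τ(m+1)},…)`. -/
noncomputable def wedge {L E : Type*} [AddCommGroup E] [Module ℝ E] {m n : ℕ}
    (ω : (Fin m → L) → Module.End ℝ E) (η : (Fin n → L) → Module.End ℝ E) :
    (Fin (m + n) → L) → Module.End ℝ E :=
  fun a => ((m.factorial * n.factorial : ℝ))⁻¹ •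
    ∑ τ : Equiv.Perm (Fin (m + n)), ((Equiv.Perm.sign τ : ℤ) •
      (ω (fun i => a (τ (Fin.castAdd n i))) * η (fun j => a (τ (Fin.natAdd m j)))))

/-- The `p`-th wedge power of an `End ℝ E`-valued 2-form. -/
noncomputable def wpow {L E : Type*} [AddCommGroup E] [Module ℝ E]
    (R : (Fin 2 → L) → Module.End ℝ E) :
    (p : ℕ) → (Fin (2 * p) → L) → Module.End ℝ E
  | 0 => fun _ => 1
  | (p + 1) => fun a => wedge R (wpow R p) (fun i => a (Fin.cast (by omega) i))

/-- The `k`-th wedge power of an `End ℝ E`-valued 1-form. -/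
noncomputable def wpow1 {L E : Type*} [AddCommGroup E] [Module ℝ E]
    (θ : (Fin 1 → L) → Module.End ℝ E) :
    (k : ℕ) → (Fin k → L) → Module.End ℝ E
  | 0 => fun _ => 1
  | (k + 1) => fun a => wedge θ (wpow1 θ k) (fun i => a (Fin.cast (by omega) i))

/-- The Chern character form `ch_p(∇) = Tr_*((R^∇)^{∧p})`. -/
noncomputable def chp {L E : Type*} (C : Type*) [LieRing L] [LieAlgebra ℝ L]
    [CommRing C] [AddCommGroup E] [Module ℝ E] [Module C E]
    (D : L →ₗ[ℝ] Module.End ℝ E) (p : ℕ) : (Fin (2 * p) → L) → C :=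
  fun a => trR C (wpow (curv2 D) p a)

/-- `∫₀ˢ f(t) dt` for a function `f : ℝ → C` given by a polynomial with
coefficients in the ℝ-algebra `C` (and `0` if `f` is not polynomial). -/
noncomputable def intPolyTo {C : Type*} [CommRing C] [Algebra ℝ C] (s : ℝ) (f : ℝ → C) : C :=
  letI := Classical.propDecidable
  if h : ∃ P : Polynomial C, ∀ t : ℝ, f t = Polynomial.eval (algebraMap ℝ C t) P then
    ∑ k ∈ Finset.range (h.choose.natDegree + 1),
      (s ^ (k + 1) / ((k : ℝ) + 1)) • h.choose.coeff k
  else 0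

/-- The valuewise integral over the standard 2-simplex
`Δ² = {(t₁,t₂) : t₁ ≥ 0, t₂ ≥ 0, t₁ + t₂ ≤ 1}` of a `C`-valued polynomial function. -/
noncomputable def intSimplex2 {C : Type*} [CommRing C] [Algebra ℝ C] (f : ℝ → ℝ → C) : C :=
  intPolyTo 1 (fun t1 => intPolyTo (1 - t1) (fun t2 => f t1 t2))

/-- The Chern–Simons transgression form for a pair of ℝ-linear connections:
`cs_p(∇⁰,∇¹) = p·∫₀¹ Tr_*(λ ∧ (R_t)^{∧(p−1)}) dt` where `λ = ∇¹ − ∇⁰` and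
`R_t` is the curvature of `∇⁰ + t•λ`. -/
noncomputable def csPair {L E : Type*} (C : Type*) [LieRing L] [LieAlgebra ℝ L]
    [CommRing C] [Algebra ℝ C] [AddCommGroup E] [Module ℝ E] [Module C E]
    (D0 D1 : L →ₗ[ℝ] Module.End ℝ E) (p : ℕ) : (Fin (2 * (p - 1) + 1) → L) → C :=
  fun a => (p : ℝ) • intPolyTo 1 (fun t =>
    trR C (wedge (fun v : Fin 1 → L => (D1 - D0) (v 0))
      (wpow (curv2 (D0 + t • (D1 - D0))) (p - 1))
      (fun i => a (Fin.cast (by omega) i))))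

/-- The Chern–Simons transgression form for a triple of ℝ-linear connections:
`cs_p(∇⁰,∇¹,∇²) = −p(p−1)·∫_{Δ²} Tr_*(λ₁ ∧ λ₂ ∧ (R_{(t₁,t₂)})^{∧(p−2)}) dt₁dt₂`
where `λᵢ = ∇ⁱ − ∇⁰` and `R_{(t₁,t₂)}` is the curvature of `∇⁰ + t₁•λ₁ + t₂•λ₂`. -/
noncomputable def csTriple {L E : Type*} (C : Type*) [LieRing L] [LieAlgebra ℝ L]
    [CommRing C] [Algebra ℝ C] [AddCommGroup E] [Module ℝ E] [Module C E]
    (D0 D1 D2 : L →ₗ[ℝ] Module.End ℝ E) (p : ℕ) : (Fin (2 * (p - 2) + 2) → L) → C :=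
  fun a => (-((p : ℝ) * ((p : ℝ) - 1))) • intSimplex2 (fun t1 t2 =>
    trR C (wedge (fun v : Fin 1 → L => (D1 - D0) (v 0))
      (wedge (fun v : Fin 1 → L => (D2 - D0) (v 0))
        (wpow (curv2 (D0 + t1 • (D1 - D0) + t2 • (D2 - D0))) (p - 2)))
      (fun i => a (Fin.cast (by omega) i))))

/-!
Let `λ = ∇¹ - ∇⁰` and regard `∇ᵗ = ∇⁰ + t λ` as one connection with values in `End(E)[t]`, with
curvature `R`. By the Bianchi identity `dR = 0`, while `dλ = ∂R/∂t`. Since the trace is cyclic and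
turns `[∇ᵗ, ·]` into `ρ`, this gives `∂/∂t Tr(R ^ p) = p d_ρ Tr(λ R ^ (p - 1))`, and integrating
over `0 ≤ t ≤ 1` exhibits the difference of the Chern character forms as exact.

Only endomorphisms commuting with `C` have a trace, whereas `∇ᵗ` itself does not commute with `C`;
the calculus of forms therefore takes values in the full `ℝ`-endomorphism ring, and cyclicity is
used only on the centralizer of `C`.
-/

theorem ofFn_update {α : Type*} {n : ℕ} [DecidableEq (Fin n)] (a : Fin n → α) (i : Fin n) (x : α) :
    List.ofFn (Function.update a i x) =
      (List.ofFn a).take i ++ x :: (List.ofFn a).drop (i + 1) := by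
  have h_set : (List.ofFn a).set i x = (List.ofFn a).take i ++ x :: (List.ofFn a).drop (i + 1) := by
    rw [List.set_eq_take_append_cons_drop, if_pos (by simp)]
  rw [← h_set]
  refine List.ext_getElem (by simp) fun j hj _ => ?_
  simp [List.getElem_set, Function.update_apply, Fin.ext_iff, eq_comm]

theorem sum_sum_dite_lt_succ {M : Type*} [AddCommMonoid M] {n : ℕ}
    (f : ∀ i j : Fin (n + 1), (i : ℕ) < j → M) :
    (∑ i : Fin (n + 1), ∑ j : Fin (n + 1), if h : (i : ℕ) < j then f i j h else 0) =
      ∑ j : Fin n, f 0 j.succ j.val.succ_pos +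
        ∑ i : Fin n, ∑ j : Fin n,
          if h : (i : ℕ) < j then f i.succ j.succ (Nat.succ_lt_succ h) else 0 := by
  simp [Fin.sum_univ_succ]

theorem dite_neg_zero {M : Type*} [AddGroup M] {p : Prop} [Decidable p] (f : p → M) :
    (if h : p then -f h else 0) = -if h : p then f h else 0 := by
  split <;> simp

theorem sum_perm_sign_smul {α V : Type*} [AddCommGroup V] {n : ℕ} (F : (Fin (n + 1) → α) → V)
    (a : Fin (n + 1) → α) :
    ∑ τ : Equiv.Perm (Fin (n + 1)), (Equiv.Perm.sign τ : ℤ) • F (a ∘ τ) =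
      ∑ i : Fin (n + 1), (-1 : ℤ) ^ (i : ℕ) • ∑ σ : Equiv.Perm (Fin n),
        (Equiv.Perm.sign σ : ℤ) • F (Fin.cons (a i) ((a ∘ i.succAbove) ∘ σ)) := by
  let e (p : Fin (n + 1) × Equiv.Perm (Fin n)) : Equiv.Perm (Fin (n + 1)) :=
    p.1.cycleRange.symm * Equiv.Perm.decomposeFin.symm (0, p.2)
  have e_zero (p) : e p 0 = p.1 := by simp [e]
  have e_succ (p) (k : Fin n) : e p k.succ = p.1.succAbove (p.2 k) := by simp [e]
  have e_sign (p) : (Equiv.Perm.sign (e p) : ℤ) = (-1) ^ (p.1 : ℕ) * Equiv.Perm.sign p.2 := by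
    simp [e, Equiv.Perm.decomposeFin.symm_sign]
  have e_injective : Function.Injective e := by
    rintro ⟨i, σ⟩ ⟨j, σ'⟩ h
    obtain rfl : i = j := by simpa [e_zero] using DFunLike.congr_fun h 0
    have h_perm : σ = σ' := Equiv.ext fun k => by
      simpa [e_succ] using DFunLike.congr_fun h k.succ
    rw [h_perm]
  have e_bijective : Function.Bijective e :=
    (Fintype.bijective_iff_injective_and_card e).2
      ⟨e_injective, by simp [Fintype.card_perm, Nat.factorial_succ]⟩
  have comp_e (p) : a ∘ e p = Fin.cons (a p.1) ((a ∘ p.1.succAbove) ∘ p.2) := by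
    ext k
    cases k using Fin.cases <;> simp [e_zero, e_succ]
  simp only [Finset.smul_sum]
  rw [← Fintype.sum_prod_type', ← e_bijective.sum_comp]
  simp only [comp_e, e_sign, mul_smul]

/-- Inhomogeneous `A`-valued forms on `L`: the restriction to lists of length `n` is the component
of degree `n`. Recursion on the list of arguments replaces the bookkeeping of permutations; being
multilinear and alternating is the separate predicate `ListForm.IsAlternating`. -/
structure ListForm (L A : Type*) where
  toFun : List L → A

namespace ListForm

variable {L A B V W k : Type*}

instance : FunLike (ListForm L A) (List L) A where
  coe := toFun
  coe_injective := fun ⟨_⟩ ⟨_⟩ h => congrArg mk h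

@[ext] theorem ext {ω η : ListForm L A} (h : ∀ l, ω l = η l) : ω = η := DFunLike.ext ω η h

/-- A form is the same as a function on lists. -/
def equivFun : ListForm L A ≃ (List L → A) := ⟨toFun, mk, fun _ => rfl, fun _ => rfl⟩

section AddCommGroup

variable [AddCommGroup A] [AddCommGroup B]

instance : AddCommGroup (ListForm L A) := equivFun.addCommGroup

instance [Semiring k] [Module k A] : Module k (ListForm L A) := equivFun.module k

@[simp] theorem zero_apply (l : List L) : (0 : ListForm L A) l = 0 := rfl

@[simp] theorem add_apply (ω η : ListForm L A) (l : List L) : (ω + η) l = ω l + η l := rfl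

@[simp] theorem neg_apply (ω : ListForm L A) (l : List L) : (-ω) l = -ω l := rfl

@[simp] theorem sub_apply (ω η : ListForm L A) (l : List L) : (ω - η) l = ω l - η l := rfl

@[simp] theorem smul_apply [Semiring k] [Module k A] (r : k) (ω : ListForm L A) (l : List L) :
    (r • ω) l = r • ω l := rfl

/-- The interior product by `x`: insertion of `x` as the first argument. -/
def contract (x : L) : ListForm L A →+ ListForm L A where
  toFun ω := ⟨fun l => ω (x :: l)⟩
  map_zero' := rfl
  map_add' _ _ := rfl

theorem apply_cons (ω : ListForm L A) (x : L) (l : List L) : ω (x :: l) = contract x ω l := rfl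

theorem contract_smul [Semiring k] [Module k A] (x : L) (r : k) (ω : ListForm L A) :
    contract x (r • ω) = r • contract x ω := rfl

theorem ext_contract {ω η : ListForm L A} (h_nil : ω [] = η [])
    (h_cons : ∀ x, contract x ω = contract x η) : ω = η := by
  ext l
  cases l with
  | nil => exact h_nil
  | cons x l => exact DFunLike.congr_fun (h_cons x) l

/-- The grade involution, equal to `(-1) ^ n` in degree `n`. -/
def involute : ListForm L A →+ ListForm L A where
  toFun ω := ⟨fun l => (-1 : ℤ) ^ l.length • ω l⟩
  map_zero' := by ext; exact smul_zero _
  map_add' _ _ := by ext; exact smul_add _ _ _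

theorem involute_apply (ω : ListForm L A) (l : List L) :
    involute ω l = (-1 : ℤ) ^ l.length • ω l := rfl

@[simp] theorem involute_apply_nil (ω : ListForm L A) : involute ω [] = ω [] := by
  simp [involute_apply]

@[simp] theorem involute_involute (ω : ListForm L A) : involute (involute ω) = ω := by
  ext l
  simp [involute_apply, smul_smul, ← mul_pow]

@[simp] theorem contract_involute (x : L) (ω : ListForm L A) :
    contract x (involute ω) = -involute (contract x ω) := by
  ext l
  simp [← apply_cons, involute_apply, pow_succ]

theorem involute_smul [Semiring k] [Module k A] (r : k) (ω : ListForm L A) :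
    involute (r • ω) = r • involute ω := by
  ext l
  exact smul_comm _ _ _

/-- The forms of degree `0`. -/
def const : A →+ ListForm L A where
  toFun a := ⟨fun | [] => a | _ :: _ => 0⟩
  map_zero' := by ext l; cases l <;> rfl
  map_add' _ _ := by
    ext l
    cases l with
    | nil => rfl
    | cons _ _ => exact (add_zero 0).symm

@[simp] theorem const_apply_nil (a : A) : const (L := L) a [] = a := rfl

@[simp] theorem contract_const (x : L) (a : A) : contract x (const a) = 0 := rfl

@[simp] theorem involute_const (a : A) : involute (const (L := L) a) = const a :=
  ext_contract (by simp) fun x => by simp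

/-- The `B`-valued form obtained by applying `f` to the values of a form. -/
def map (f : A →+ B) : ListForm L A →+ ListForm L B where
  toFun ω := ⟨fun l => f (ω l)⟩
  map_zero' := by ext; exact map_zero f
  map_add' _ _ := by ext; exact map_add f _ _

@[simp] theorem map_apply (f : A →+ B) (ω : ListForm L A) (l : List L) : map f ω l = f (ω l) := rfl

@[simp] theorem contract_map (f : A →+ B) (x : L) (ω : ListForm L A) :
    contract x (map f ω) = map f (contract x ω) := rfl

@[simp] theorem map_involute (f : A →+ B) (ω : ListForm L A) :
    map f (involute ω) = involute (map f ω) := by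
  ext
  exact map_zsmul f _ _

@[simp] theorem map_const (f : A →+ B) (a : A) : map f (const (L := L) a) = const (f a) :=
  ext_contract rfl fun x => by simp

end AddCommGroup

section Ring

variable [Ring A] [Ring B]

/-- The value of the wedge product `ω * η` on a list: the product is the one for which every
`contract x` is an antiderivation. -/
def mulAt : List L → ListForm L A → ListForm L A → A
  | [], ω, η => ω [] * η []
  | x :: l, ω, η => mulAt l (contract x ω) η + mulAt l (involute ω) (contract x η)

instance : Mul (ListForm L A) := ⟨fun ω η => ⟨fun l => mulAt l ω η⟩⟩

@[simp] theorem mul_apply_nil (ω η : ListForm L A) : (ω * η) [] = ω [] * η [] := rfl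

theorem mul_apply_cons (x : L) (l : List L) (ω η : ListForm L A) :
    (ω * η) (x :: l) = (contract x ω * η) l + (involute ω * contract x η) l := rfl

@[simp] theorem contract_mul (x : L) (ω η : ListForm L A) :
    contract x (ω * η) = contract x ω * η + involute ω * contract x η := rfl

instance : NonUnitalNonAssocRing (ListForm L A) where
  left_distrib ω η θ := by
    ext l
    induction l generalizing ω η θ with
    | nil => simp [mul_add]
    | cons x l ih => simp only [mul_apply_cons, map_add, add_apply, ih]; abel
  right_distrib ω η θ := by
    ext l
    induction l generalizing ω η θ with
    | nil => simp [add_mul]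
    | cons x l ih => simp only [mul_apply_cons, map_add, add_apply, ih]; abel
  zero_mul ω := by
    ext l
    induction l generalizing ω with
    | nil => simp
    | cons x l ih => simp [mul_apply_cons, ih]
  mul_zero ω := by
    ext l
    induction l generalizing ω with
    | nil => simp
    | cons x l ih => simp [mul_apply_cons, ih]

@[simp] theorem involute_mul (ω η : ListForm L A) :
    involute (ω * η) = involute ω * involute η := by
  ext l
  induction l generalizing ω η with
  | nil => simp
  | cons x l ih =>
    simp only [apply_cons, contract_involute, contract_mul, map_add, neg_mul, mul_neg, neg_apply,
      add_apply, ih]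
    abel

@[simp] theorem const_mul_apply (a : A) (ω : ListForm L A) (l : List L) :
    (const a * ω : ListForm L A) l = a * ω l := by
  induction l generalizing ω with
  | nil => simp
  | cons x l ih =>
    rw [apply_cons, contract_mul, contract_const, zero_mul, zero_add, involute_const, ih,
      ← apply_cons]

@[simp] theorem mul_const_apply (a : A) (ω : ListForm L A) (l : List L) :
    (ω * const a : ListForm L A) l = ω l * a := by
  induction l generalizing ω with
  | nil => simp
  | cons x l ih =>
    rw [apply_cons, contract_mul, contract_const, mul_zero, add_zero, ih, ← apply_cons]

instance : One (ListForm L A) := ⟨const 1⟩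

theorem one_def : (1 : ListForm L A) = const 1 := rfl

instance : Ring (ListForm L A) where
  __ := (inferInstance : NonUnitalNonAssocRing (ListForm L A))
  mul_assoc ω η θ := by
    ext l
    induction l generalizing ω η θ with
    | nil => simp [mul_assoc]
    | cons x l ih =>
      simp only [apply_cons, contract_mul, involute_mul, add_mul, mul_add, add_apply, ih]
      abel
  one_mul ω := by ext l; simp [one_def]
  mul_one ω := by ext l; simp [one_def]

theorem map_ringHom_mul (f : A →+* B) (ω η : ListForm L A) :
    map (f : A →+ B) (ω * η) = map (f : A →+ B) ω * map (f : A →+ B) η := by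
  ext l
  induction l generalizing ω η with
  | nil => simp
  | cons x l ih =>
    simp only [apply_cons, contract_map, contract_mul, map_add, add_apply, ih, map_involute]

theorem map_ringHom_pow (f : A →+* B) (ω : ListForm L A) (n : ℕ) :
    map (f : A →+ B) (ω ^ n) = map (f : A →+ B) ω ^ n := by
  induction n with
  | zero => simp [one_def]
  | succ n ih => rw [pow_succ, pow_succ, map_ringHom_mul, ih]

theorem map_derivation_mul (δ : A →+ A) (hδ : ∀ a b, δ (a * b) = δ a * b + a * δ b)
    (ω η : ListForm L A) : map δ (ω * η) = map δ ω * η + ω * map δ η := by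
  ext l
  induction l generalizing ω η with
  | nil => simp [hδ]
  | cons x l ih =>
    simp only [apply_cons, contract_map, contract_mul, map_add, add_apply, ih, map_involute]
    abel

instance [Semiring k] [Module k A] [IsScalarTower k A A] :
    IsScalarTower k (ListForm L A) (ListForm L A) where
  smul_assoc r ω η := by
    ext l
    simp only [smul_eq_mul, smul_apply]
    induction l generalizing ω η with
    | nil => exact smul_mul_assoc r (ω []) (η [])
    | cons x l ih => simp [mul_apply_cons, contract_smul, involute_smul, ih]

instance [Semiring k] [Module k A] [SMulCommClass k A A] :
    SMulCommClass k (ListForm L A) (ListForm L A) where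
  smul_comm r ω η := by
    ext l
    simp only [smul_eq_mul, smul_apply]
    induction l generalizing ω η with
    | nil => exact (mul_smul_comm r (ω []) (η [])).symm
    | cons x l ih => simp [mul_apply_cons, contract_smul, ih]

end Ring

section LowDegree

variable [AddCommGroup A] [AddCommGroup B]

/-- The form of degree `1` given by `f`. -/
def oneForm (f : L → A) : ListForm L A where
  toFun
    | [x] => f x
    | _ => 0

/-- The form of degree `2` given by `K`. -/
def twoForm (K : L → L → A) : ListForm L A where
  toFun
    | [x, y] => K x y
    | _ => 0

@[simp] theorem oneForm_apply_nil (f : L → A) : oneForm f [] = 0 := rfl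

@[simp] theorem contract_oneForm (f : L → A) (x : L) :
    contract x (oneForm f) = const (f x) := by
  ext l
  cases l <;> rfl

@[simp] theorem twoForm_apply_nil (K : L → L → A) : twoForm K [] = 0 := rfl

@[simp] theorem contract_twoForm (K : L → L → A) (x : L) :
    contract x (twoForm K) = oneForm (K x) := by
  ext l
  match l with
  | [] | [_] | _ :: _ :: _ => rfl

theorem involute_twoForm (K : L → L → A) : involute (twoForm K) = twoForm K :=
  ext_contract (by simp) fun x => ext_contract (by simp) fun y => by simp

theorem map_twoForm (f : A →+ B) (K : L → L → A) :
    map f (twoForm K) = twoForm fun x y => f (K x y) :=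
  ext_contract (by simp) fun x => ext_contract (by simp) fun y => by simp

end LowDegree

section ValuedIn

variable [Ring A]

/-- The subring of forms with values in the subring `S`. -/
def valuedIn (S : Subring A) : Subring (ListForm L A) where
  carrier := {ω | ∀ l, ω l ∈ S}
  zero_mem' _ := S.zero_mem
  add_mem' hω hη l := S.add_mem (hω l) (hη l)
  neg_mem' hω l := S.neg_mem (hω l)
  one_mem' l := by
    cases l with
    | nil => exact S.one_mem
    | cons _ _ => exact S.zero_mem
  mul_mem' {ω η} hω hη l := by
    induction l generalizing ω η with
    | nil => exact S.mul_mem (hω []) (hη [])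
    | cons x l ih =>
      exact S.add_mem (ih (fun l => hω (x :: l)) hη)
        (ih (fun l => S.zsmul_mem (hω l) _) fun l => hη (x :: l))

theorem contract_mem_valuedIn {S : Subring A} {ω : ListForm L A} (hω : ω ∈ valuedIn S) (x : L) :
    contract x ω ∈ valuedIn S :=
  fun l => hω (x :: l)

theorem oneForm_mem_valuedIn {S : Subring A} {f : L → A} (hf : ∀ x, f x ∈ S) :
    oneForm f ∈ valuedIn S
  | [] | _ :: _ :: _ => S.zero_mem
  | [x] => hf x

theorem twoForm_mem_valuedIn {S : Subring A} {K : L → L → A} (hK : ∀ x y, K x y ∈ S) :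
    twoForm K ∈ valuedIn S
  | [] | [_] | _ :: _ :: _ :: _ => S.zero_mem
  | [x, y] => hK x y

variable [AddCommGroup V]

theorem apply_mul_comm_of_tracial {S : Subring A} {T : A →+ V}
    (hT : ∀ a ∈ S, ∀ b ∈ S, T (a * b) = T (b * a)) (l : List L) {ω η : ListForm L A}
    (hω : ω ∈ valuedIn S) (hη : η ∈ valuedIn S) :
    (involute ω = ω → T ((ω * η) l) = T ((η * ω) l)) ∧
      (involute ω = -ω → T ((ω * η) l) = T ((involute η * ω) l)) := by
  induction l generalizing ω η with
  | nil =>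
    have h_nil := hT _ (hω []) _ (hη [])
    exact ⟨fun _ => h_nil, fun _ => by simpa using h_nil⟩
  | cons x l ih =>
    have ih_contract := ih (contract_mem_valuedIn hω x) hη
    have ih_right := ih hω (contract_mem_valuedIn hη x)
    constructor <;> intro h_parity
    · have h_odd : involute (contract x ω) = -contract x ω := by
        rw [← neg_eq_iff_eq_neg, ← contract_involute, h_parity]
      simp only [mul_apply_cons, map_add, h_parity, ih_contract.2 h_odd, ih_right.1 h_parity]
      abel
    · have h_even : involute (contract x ω) = contract x ω := by
        rw [← neg_inj, ← contract_involute, h_parity, map_neg]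
      simp only [mul_apply_cons, map_add, h_parity, neg_mul, neg_apply, map_neg,
        ih_contract.1 h_even, ih_right.2 h_parity, contract_involute, involute_involute]
      abel

theorem map_mul_comm_of_even {S : Subring A} {T : A →+ V}
    (hT : ∀ a ∈ S, ∀ b ∈ S, T (a * b) = T (b * a)) {ω η : ListForm L A}
    (hω : ω ∈ valuedIn S) (hη : η ∈ valuedIn S) (h_even : involute ω = ω) :
    map T (ω * η) = map T (η * ω) :=
  ext fun l => (apply_mul_comm_of_tracial hT l hω hη).1 h_even

end ValuedIn

section Differential

variable [LieRing L] [AddCommGroup A] [AddCommGroup B]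

/-- Evaluation of forms on a list of arguments. -/
def eval (l : List L) : ListForm L A →+ A where
  toFun ω := ω l
  map_zero' := rfl
  map_add' _ _ := rfl

/-- The value of the Lie derivative along `x` on a list, see `ListForm.lieDeriv`. -/
def lieDerivAt (act : L → A →+ A) (x : L) : List L → ListForm L A →+ A
  | [] => (act x).comp (eval [])
  | y :: l => (lieDerivAt act x l).comp (contract y) - eval (⁅x, y⁆ :: l)

/-- The Lie derivative along `x` of forms with values in `A`, on which `L` operates by `act`.
It is `act x` in degree `0` and is determined by `[ℒ_x, ι_y] = ι_⁅x, y⁆`. -/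
def lieDeriv (act : L → A →+ A) (x : L) : ListForm L A →+ ListForm L A where
  toFun ω := ⟨fun l => lieDerivAt act x l ω⟩
  map_zero' := by ext l; exact map_zero (lieDerivAt act x l)
  map_add' ω η := by ext l; exact map_add (lieDerivAt act x l) ω η

/-- The value of the differential on a list, see `ListForm.differential`. -/
def differentialAt (act : L → A →+ A) : List L → ListForm L A →+ A
  | [] => 0
  | x :: l => (eval l).comp (lieDeriv act x) - (differentialAt act l).comp (contract x)

/-- The Chevalley–Eilenberg differential, determined by Cartan's formula
`ι_x ∘ d = ℒ_x - d ∘ ι_x`. It is meaningful for any family of operators `act`, but squares to zero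
only for an action. -/
def differential (act : L → A →+ A) : ListForm L A →+ ListForm L A where
  toFun ω := ⟨fun l => differentialAt act l ω⟩
  map_zero' := by ext l; exact map_zero (differentialAt act l)
  map_add' ω η := by ext l; exact map_add (differentialAt act l) ω η

variable (act : L → A →+ A)

@[simp] theorem lieDeriv_apply_nil (x : L) (ω : ListForm L A) :
    lieDeriv act x ω [] = act x (ω []) := rfl

@[simp] theorem contract_lieDeriv (x y : L) (ω : ListForm L A) :
    contract y (lieDeriv act x ω) = lieDeriv act x (contract y ω) - contract ⁅x, y⁆ ω := rfl

@[simp] theorem differential_apply_nil (ω : ListForm L A) : differential act ω [] = 0 := rfl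

@[simp] theorem contract_differential (x : L) (ω : ListForm L A) :
    contract x (differential act ω) = lieDeriv act x ω - differential act (contract x ω) := rfl

@[simp] theorem lieDeriv_involute (x : L) (ω : ListForm L A) :
    lieDeriv act x (involute ω) = involute (lieDeriv act x ω) := by
  ext l
  induction l generalizing ω with
  | nil => simp
  | cons y l ih =>
    simp only [apply_cons, contract_lieDeriv, contract_involute, map_neg, map_sub, sub_apply,
      neg_apply, ih]
    abel

@[simp] theorem differential_involute (ω : ListForm L A) :
    differential act (involute ω) = -involute (differential act ω) := by
  ext l
  induction l generalizing ω with
  | nil => simp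
  | cons x l ih =>
    simp only [apply_cons, contract_differential, contract_involute, lieDeriv_involute, map_neg,
      map_sub, sub_apply, neg_apply, ih]
    abel

@[simp] theorem lieDeriv_const (x : L) (a : A) : lieDeriv act x (const a) = const (act x a) :=
  ext_contract rfl fun y => by simp

theorem lieDeriv_oneForm (x : L) (f : L → A) :
    lieDeriv act x (oneForm f) = oneForm fun y => act x (f y) - f ⁅x, y⁆ :=
  ext_contract (by simp) fun y => by simp

theorem differential_const (a : A) : differential act (const a) = oneForm fun x => act x a :=
  ext_contract (by simp) fun x => by simp

theorem differential_oneForm (f : L → A) :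
    differential act (oneForm f) = twoForm fun x y => act x (f y) - f ⁅x, y⁆ - act y (f x) :=
  ext_contract (by simp) fun x => ext_contract
    (by simp) fun y => by simp [differential_const, lieDeriv_oneForm]

theorem differential_twoForm_eq_zero (K : L → L → A)
    (hK : ∀ x y z, act x (K y z) - K y ⁅x, z⁆ - K ⁅x, y⁆ z
      = act y (K x z) - K x ⁅y, z⁆ - act z (K x y)) :
    differential act (twoForm K) = 0 :=
  ext_contract (by simp) fun x => ext_contract (by simp) fun y => ext_contract (by simp) fun z => by
    simp only [contract_differential, contract_lieDeriv, contract_twoForm, contract_oneForm,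
      map_sub, lieDeriv_oneForm, differential_const]
    simp only [← map_sub, hK, sub_self, map_zero]

theorem map_lieDeriv {S : Set A} {T : A →+ B} {act' : L → B →+ B}
    (hT : ∀ x, ∀ s ∈ S, T (act x s) = act' x (T s)) (x : L) {ω : ListForm L A}
    (hω : ∀ l, ω l ∈ S) : map T (lieDeriv act x ω) = lieDeriv act' x (map T ω) := by
  ext l
  induction l generalizing ω with
  | nil => exact hT x _ (hω [])
  | cons y l ih =>
    simp only [apply_cons, contract_map, contract_lieDeriv, map_sub, sub_apply,
      ih (ω := contract y ω) fun l => hω (y :: l)]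

theorem map_differential {S : Set A} {T : A →+ B} {act' : L → B →+ B}
    (hT : ∀ x, ∀ s ∈ S, T (act x s) = act' x (T s)) {ω : ListForm L A}
    (hω : ∀ l, ω l ∈ S) : map T (differential act ω) = differential act' (map T ω) := by
  ext l
  induction l generalizing ω with
  | nil => simp
  | cons x l ih =>
    simp only [apply_cons, contract_map, contract_differential, map_sub, sub_apply,
      map_lieDeriv act hT x hω, ih (ω := contract x ω) fun l => hω (x :: l)]

end Differential

section Derivation

variable [LieRing L] [Ring A] {act : L → A →+ A}
  (hact : ∀ x a b, act x (a * b) = act x a * b + a * act x b)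

include hact

theorem lieDeriv_mul (x : L) (ω η : ListForm L A) :
    lieDeriv act x (ω * η) = lieDeriv act x ω * η + ω * lieDeriv act x η := by
  ext l
  induction l generalizing ω η with
  | nil => simp [hact]
  | cons y l ih =>
    simp only [apply_cons, contract_lieDeriv, contract_mul, map_add, add_apply, sub_apply, ih,
      lieDeriv_involute, sub_mul, mul_sub]
    abel

theorem differential_mul (ω η : ListForm L A) :
    differential act (ω * η) = differential act ω * η + involute ω * differential act η := by
  ext l
  induction l generalizing ω η with
  | nil => simp
  | cons x l ih =>
    simp only [apply_cons, contract_differential, contract_mul, contract_involute, map_add,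
      add_apply, sub_apply, ih, lieDeriv_mul hact, differential_involute, involute_involute,
      sub_mul, mul_sub, neg_mul, neg_apply]
    abel

theorem differential_pow_eq_zero {ω : ListForm L A} (hω : differential act ω = 0) (n : ℕ) :
    differential act (ω ^ n) = 0 := by
  induction n with
  | zero =>
    have act_one (x : L) : act x 1 = 0 := by simpa using hact x 1 1
    rw [pow_zero, one_def, differential_const]
    exact ext_contract rfl fun x => by simp [act_one]
  | succ n ih => rw [pow_succ, differential_mul hact, ih, hω, zero_mul, mul_zero, add_zero]

end Derivation

section Alternating

variable [CommRing k] [AddCommGroup L] [Module k L]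

section Module

variable [AddCommGroup A] [Module k A] [AddCommGroup B] [Module k B]

variable (k) in
/-- A form is alternating over `k` if it is `k`-linear in each argument and vanishes whenever two
adjacent arguments agree. -/
structure IsAlternating (ω : ListForm L A) : Prop where
  map_smul_add (l₁ l₂ : List L) (r : k) (x y : L) :
    ω (l₁ ++ (r • x + y) :: l₂) = r • ω (l₁ ++ x :: l₂) + ω (l₁ ++ y :: l₂)
  map_self (l₁ l₂ : List L) (x : L) : ω (l₁ ++ x :: x :: l₂) = 0

namespace IsAlternating

variable {ω η : ListForm L A}

theorem of_contract
    (h_smul_add : ∀ (r : k) x y, contract (r • x + y) ω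
      = r • contract x ω + contract y ω)
    (h_self : ∀ x, contract x (contract x ω) = 0)
    (h_contract : ∀ x, IsAlternating k (contract x ω)) : IsAlternating k ω where
  map_smul_add
    | [], l₂, r, x, y => DFunLike.congr_fun (h_smul_add r x y) l₂
    | z :: l₁, l₂, r, x, y => (h_contract z).map_smul_add l₁ l₂ r x y
  map_self
    | [], l₂, x => DFunLike.congr_fun (h_self x) l₂
    | z :: l₁, l₂, x => (h_contract z).map_self l₁ l₂ x

protected theorem contract (hω : IsAlternating k ω) (x : L) : IsAlternating k (contract x ω) :=
  ⟨fun l₁ => hω.map_smul_add (x :: l₁), fun l₁ => hω.map_self (x :: l₁)⟩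

theorem contract_smul_add (hω : IsAlternating k ω) (r : k) (x y : L) :
    contract (r • x + y) ω = r • contract x ω + contract y ω :=
  ext fun l => hω.map_smul_add [] l r x y

theorem contract_contract_self (hω : IsAlternating k ω) (x : L) :
    contract x (contract x ω) = 0 :=
  ext fun l => hω.map_self [] l x

theorem contract_swap (hω : IsAlternating k ω) (x y : L) :
    contract x (contract y ω) = -contract y (contract x ω) := by
  have contract_add {θ : ListForm L A} (hθ : IsAlternating k θ) :
      contract (x + y) θ = contract x θ + contract y θ := by
    simpa using hθ.contract_smul_add 1 x y
  have h_sum := hω.contract_contract_self (x + y)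
  rw [contract_add (hω.contract _), contract_add hω, map_add, map_add,
    hω.contract_contract_self, hω.contract_contract_self, zero_add, add_zero] at h_sum
  exact eq_neg_of_add_eq_zero_left h_sum

protected theorem involute (hω : IsAlternating k ω) : IsAlternating k (involute ω) where
  map_smul_add l₁ l₂ r x y := by
    simp [involute_apply, hω.map_smul_add, smul_comm r]
  map_self l₁ l₂ x := by simp [involute_apply, hω.map_self]

protected theorem map (hω : IsAlternating k ω) (f : A →ₗ[k] B) :
    IsAlternating k (map (f : A →+ B) ω) where
  map_smul_add l₁ l₂ r x y := by simp [hω.map_smul_add]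
  map_self l₁ l₂ x := by simp [hω.map_self]

protected theorem zero : IsAlternating k (0 : ListForm L A) := ⟨by simp, by simp⟩

protected theorem const (a : A) : IsAlternating k (const (L := L) a) :=
  of_contract (by simp) (by simp) fun x => by simpa using IsAlternating.zero

protected theorem oneForm {f : L → A} (hf : IsLinearMap k f) :
    IsAlternating k (oneForm f) :=
  of_contract (fun r x y => ext_contract (by simp [hf.map_add, hf.map_smul])
    fun z => by simp [contract_smul]) (by simp) fun x => by
    simpa using IsAlternating.const (f x)

protected theorem twoForm {K : L → L → A} (h_left : ∀ y, IsLinearMap k (K · y))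
    (h_right : ∀ x, IsLinearMap k (K x)) (h_self : ∀ x, K x x = 0) :
    IsAlternating k (twoForm K) :=
  of_contract (fun r x y => by
      rw [contract_twoForm, contract_twoForm, contract_twoForm]
      exact ext_contract (by simp) fun z => ext_contract
        (by simp [contract_smul, (h_left z).map_add, (h_left z).map_smul])
        fun w => by simp [contract_smul])
    (fun x => by simp [h_self]) fun x => by
    simpa using IsAlternating.oneForm (h_right x)

theorem exists_units_smul_of_perm (hω : IsAlternating k ω) {l l' : List L} (hl : l.Perm l') :
    ∃ u : ℤˣ, ω l = u • ω l' := by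
  induction hl generalizing ω with
  | nil => exact ⟨1, (one_smul _ _).symm⟩
  | cons x _ ih => exact ih (hω.contract x)
  | swap x y l =>
    refine ⟨-1, ?_⟩
    rw [Units.neg_smul, one_smul]
    exact DFunLike.congr_fun (hω.contract_swap x y) l
  | trans _ _ ih ih' =>
    obtain ⟨u, hu⟩ := ih hω
    obtain ⟨v, hv⟩ := ih' hω
    exact ⟨u * v, by rw [hu, hv, mul_smul]⟩

theorem eq_zero_of_not_nodup (hω : IsAlternating k ω) {l : List L} (hl : ¬l.Nodup) : ω l = 0 := by
  obtain ⟨x, hx⟩ := List.exists_duplicate_iff_not_nodup.2 hl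
  obtain ⟨l', hl'⟩ := (List.duplicate_iff_sublist.1 hx).exists_perm_append
  obtain ⟨u, hu⟩ := hω.exists_units_smul_of_perm hl'
  rw [hu, show [x, x] ++ l' = [] ++ x :: x :: l' from rfl, hω.map_self, smul_zero]

end IsAlternating

/-- The component of degree `n` of an alternating form. -/
def IsAlternating.toAlternatingMap {ω : ListForm L A} (hω : IsAlternating k ω) (n : ℕ) :
    L [⋀^Fin n]→ₗ[k] A where
  toFun a := ω (List.ofFn a)
  map_update_add' a i x y := by
    simpa only [ofFn_update, one_smul] using hω.map_smul_add _ _ 1 x y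
  map_update_smul' a i r x := by
    simp only [ofFn_update]
    have h_zero := hω.map_smul_add ((List.ofFn a).take i) ((List.ofFn a).drop (i + 1)) 1 0 0
    simp only [smul_zero, add_zero, one_smul, left_eq_add] at h_zero
    simpa [h_zero] using hω.map_smul_add ((List.ofFn a).take i) ((List.ofFn a).drop (i + 1)) r x 0
  map_eq_zero_of_eq' a i j h hij :=
    hω.eq_zero_of_not_nodup fun h_nodup => hij (List.nodup_ofFn.1 h_nodup h)

theorem IsAlternating.apply_ofFn_perm {ω : ListForm L A} (hω : IsAlternating k ω) {n : ℕ}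
    (a : Fin n → L) (σ : Equiv.Perm (Fin n)) :
    ω (List.ofFn (a ∘ σ)) = Equiv.Perm.sign σ • ω (List.ofFn a) :=
  (hω.toAlternatingMap n).map_perm a σ

end Module

section Algebra

variable [Ring A] [Algebra k A] {ω η : ListForm L A}

protected theorem IsAlternating.mul (hω : IsAlternating k ω) (hη : IsAlternating k η) :
    IsAlternating k (ω * η) where
  map_smul_add l₁ l₂ r x y := by
    induction l₁ generalizing ω η with
    | nil =>
      simp only [List.nil_append, apply_cons, contract_mul, hω.contract_smul_add,
        hη.contract_smul_add, add_mul, mul_add, smul_mul_assoc, mul_smul_comm, add_apply,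
        smul_apply, smul_add]
      abel
    | cons z l₁ ih =>
      simp only [List.cons_append, mul_apply_cons, ih (hω.contract z) hη,
        ih hω.involute (hη.contract z), smul_add]
      abel
  map_self l₁ l₂ x := by
    induction l₁ generalizing ω η with
    | nil => simp [apply_cons, hω.contract_contract_self, hη.contract_contract_self]
    | cons z l₁ ih =>
      rw [List.cons_append, mul_apply_cons, ih (hω.contract z) hη,
        ih hω.involute (hη.contract z), add_zero]

protected theorem IsAlternating.pow (hω : IsAlternating k ω) (n : ℕ) : IsAlternating k (ω ^ n) := by
  induction n with
  | zero => exact IsAlternating.const 1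
  | succ n ih => rw [pow_succ]; exact ih.mul hω

end Algebra

end Alternating

section DGen

variable [CommRing k] [LieRing L] [Module k L] [AddCommGroup A] [Module k A]
  {ω : ListForm L A}

theorem IsAlternating.lieDeriv_ofFn (hω : IsAlternating k ω) (act : L → A →+ A) (x : L) {n : ℕ}
    (a : Fin (n + 1) → L) :
    lieDeriv act x ω (List.ofFn a) = act x (ω (List.ofFn a)) -
      ∑ j : Fin (n + 1),
        (-1 : ℤ) ^ (j : ℕ) • ω (⁅x, a j⁆ :: List.ofFn fun i => a (j.succAbove i)) := by
  induction n generalizing ω with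
  | zero => simp [apply_cons]
  | succ n ih =>
    have bracket_term (j : Fin (n + 1)) :
        ω (⁅x, a j.succ⁆ :: List.ofFn fun i => a (j.succ.succAbove i)) =
          -contract (a 0) ω (⁅x, a j.succ⁆ :: List.ofFn fun i => a (j.succAbove i).succ) := by
      rw [List.ofFn_succ]
      simpa [apply_cons] using DFunLike.congr_fun (hω.contract_swap (a 0) ⁅x, a j.succ⁆) _
    rw [List.ofFn_succ, apply_cons, contract_lieDeriv, sub_apply, ih (hω.contract _),
      Fin.sum_univ_succ (n := n + 1)]
    simp only [bracket_term, Fin.val_zero, pow_zero, one_smul, Fin.zero_succAbove, Fin.val_succ,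
      pow_succ, mul_neg_one, neg_smul, smul_neg, neg_neg, ← apply_cons]
    abel

omit [LieRing L] in
theorem apply_ofFn_remove_succ (ω : ListForm L A) {n : ℕ} (a : Fin (n + 2) → L)
    (i : Fin (n + 1)) :
    ω (List.ofFn fun j => a (i.succ.succAbove j)) =
      contract (a 0) ω (List.ofFn fun j => a (i.succAbove j).succ) := by
  rw [List.ofFn_succ]
  simp [apply_cons]

theorem IsAlternating.apply_cons_ofFn_remove_succ (hω : IsAlternating k ω) {n : ℕ}
    (a : Fin (n + 3) → L) (x : L) (i : Fin (n + 1)) (j : Fin (n + 2)) :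
    ω (List.ofFn (Fin.cons x fun l : Fin (n + 1) => a (j.succ.succAbove (i.succ.succAbove l)))) =
      -contract (a 0) ω
        (List.ofFn (Fin.cons x fun l : Fin n => a (j.succAbove (i.succAbove l)).succ)) := by
  simp only [List.ofFn_succ, Fin.cons_zero, Fin.cons_succ, Fin.succ_succAbove_zero,
    Fin.succ_succAbove_succ, apply_cons]
  exact DFunLike.congr_fun (hω.contract_swap (a 0) x) _

theorem IsAlternating.dGen_ofFn (hω : IsAlternating k ω) (act : L → A →+ A) {n : ℕ}
    (a : Fin (n + 1) → L) :
    dGen (fun x c => act x c) (fun v : Fin n → L => ω (List.ofFn v)) a =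
      differential act ω (List.ofFn a) := by
  cases n with
  | zero => simp [dGen, apply_cons]
  | succ n =>
    induction n generalizing ω with
    | zero =>
      have h_dGen : dGen (fun x c => act x c) (fun v : Fin 1 → L => ω (List.ofFn v)) a =
          act (a 0) (ω [a 1]) - act (a 1) (ω [a 0]) - ω [⁅a 0, a 1⁆] := by
        simp [dGen, Fin.sum_univ_two, sub_eq_add_neg]
      rw [h_dGen, sub_right_comm]
      simp [apply_cons]
    | succ n ih =>
      have bracket_zero_term (j : Fin (n + 2)) :
          List.ofFn (Fin.cons ⁅a 0, a j.succ⁆ fun l : Fin (n + 1) => a (j.succ.succAbove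
            ((⟨(0 : Fin (n + 3)), Nat.succ_pos _⟩ : Fin (n + 2)).succAbove l))) =
          ⁅a 0, a j.succ⁆ :: List.ofFn fun l => a (j.succAbove l).succ := by
        simp
      rw [List.ofFn_succ, apply_cons, contract_differential, sub_apply, hω.lieDeriv_ofFn,
        ← ih (hω.contract _)]
      simp only [dGen]
      rw [sum_sum_dite_lt_succ (n := n + 2), Fin.sum_univ_succ (n := n + 2)]
      simp only [apply_ofFn_remove_succ, bracket_zero_term]
      have bracket_term (i j : Fin (n + 2)) (h : (i : ℕ) < j) :=
        hω.apply_cons_ofFn_remove_succ a ⁅a i.succ, a j.succ⁆ ⟨i, by have := j.isLt; omega⟩ j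
      simp only [Fin.succ_mk] at bracket_term
      have sign_add (i j : ℕ) : (-1 : ℤ) ^ (i + 1 + (j + 1)) = (-1) ^ (i + j) := by ring
      simp (disch := assumption) only [bracket_term, Fin.val_succ, sign_add, pow_succ, mul_neg_one,
        Fin.val_zero, zero_add, pow_zero, one_smul, neg_smul, smul_neg, Finset.sum_neg_distrib,
        Fin.zero_succAbove, dite_neg_zero]
      abel

end DGen

section Wedge

variable [AddCommGroup A] {m : ℕ} {ω : ListForm L A}

/-- The operator equal to `n` in degree `n`. -/
def degree : ListForm L A →+ ListForm L A where
  toFun ω := ⟨fun l => l.length • ω l⟩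
  map_zero' := by ext; exact smul_zero _
  map_add' _ _ := by ext; exact smul_add _ _ _

theorem degree_apply (ω : ListForm L A) (l : List L) : degree ω l = l.length • ω l := rfl

@[simp] theorem degree_apply_nil (ω : ListForm L A) : degree ω [] = 0 := zero_smul ℕ _

theorem contract_degree (x : L) (ω : ListForm L A) :
    contract x (degree ω) = degree (contract x ω) + contract x ω := by
  ext l
  simp [← apply_cons, degree_apply, add_smul]

theorem involute_degree (ω : ListForm L A) : involute (degree ω) = degree (involute ω) := by
  ext l
  exact smul_comm _ _ _

/-- The form `ω` vanishes outside degree `m`. -/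
def IsHomogeneous (ω : ListForm L A) (m : ℕ) : Prop :=
  ∀ l : List L, l.length ≠ m → ω l = 0

theorem IsHomogeneous.degree_eq (hω : ω.IsHomogeneous m) : degree ω = m • ω := by
  ext l
  rw [degree_apply, smul_apply]
  obtain h_length | h_length := eq_or_ne l.length m
  · rw [h_length]
  · rw [hω l h_length, smul_zero, smul_zero]

protected theorem IsHomogeneous.contract (hω : ω.IsHomogeneous (m + 1)) (x : L) :
    (contract x ω).IsHomogeneous m :=
  fun l hl => hω (x :: l) (by simpa using hl)

theorem IsHomogeneous.eq_const (hω : ω.IsHomogeneous 0) : ω = const (ω []) :=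
  ext_contract rfl fun x => ext fun l => hω (x :: l) (Nat.succ_ne_zero _)

theorem isHomogeneous_twoForm (K : L → L → A) : (twoForm K).IsHomogeneous 2
  | [], _ | [_], _ | _ :: _ :: _ :: _, _ => rfl
  | [_, _], h => absurd rfl h

end Wedge

section WedgeAlternating

variable [Ring A] {m n : ℕ} {ω η : ListForm L A} [CommRing k] [AddCommGroup L] [Module k L]
  [Algebra k A]

theorem IsAlternating.sum_contract_mul_ofFn (hω : IsAlternating k ω) (η : ListForm L A)
    (a : Fin (n + 1) → L) :
    ∑ i : Fin (n + 1),
        (-1 : ℤ) ^ (i : ℕ) • (contract (a i) ω * η) (List.ofFn fun j => a (i.succAbove j)) =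
      (degree ω * η) (List.ofFn a) := by
  induction n generalizing ω η with
  | zero => simp [mul_apply_cons, contract_degree]
  | succ n ih =>
    have succ_term (i : Fin (n + 1)) :
        (contract (a i.succ) ω * η) (List.ofFn fun j => a (i.succ.succAbove j)) =
          -((contract (a i.succ) (contract (a 0) ω) * η)
            (List.ofFn fun j => a (i.succAbove j).succ) +
          (contract (a i.succ) (involute ω) * contract (a 0) η)
            (List.ofFn fun j => a (i.succAbove j).succ)) := by
      rw [List.ofFn_succ, mul_apply_cons, Fin.succ_succAbove_zero, hω.contract_swap (a 0)]
      simp [add_comm]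
    rw [Fin.sum_univ_succ]
    simp only [succ_term, Fin.val_zero, pow_zero, one_smul, Fin.zero_succAbove, Fin.val_succ,
      pow_succ, mul_neg_one, smul_neg, neg_smul, neg_neg, neg_add, smul_add, Finset.sum_add_distrib,
      ih (hω.contract _) _ fun j => a j.succ, ih hω.involute _ fun j => a j.succ]
    rw [List.ofFn_succ (f := a), mul_apply_cons, contract_degree, involute_degree, add_mul,
      add_apply]
    abel

theorem IsAlternating.sum_perm_take_mul_drop (hω : IsAlternating k ω) (h_deg : ω.IsHomogeneous m)
    (hη : IsAlternating k η) {N : ℕ} (hN : N = m + n) (a : Fin N → L) :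
    ∑ τ : Equiv.Perm (Fin N), (Equiv.Perm.sign τ : ℤ) •
        (ω ((List.ofFn (a ∘ τ)).take m) * η ((List.ofFn (a ∘ τ)).drop m)) =
      (m.factorial * n.factorial) • (ω * η) (List.ofFn a) := by
  induction m generalizing ω N with
  | zero =>
    obtain rfl : N = n := by omega
    have sign_smul_self (τ : Equiv.Perm (Fin N)) (x : A) :
        (Equiv.Perm.sign τ : ℤ) • (Equiv.Perm.sign τ : ℤ) • x = x := by
      rw [← Units.smul_def, ← Units.smul_def, smul_smul, Int.units_mul_self, one_smul]
    rw [h_deg.eq_const]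
    simp only [List.take_zero, List.drop_zero, hη.apply_ofFn_perm, Units.smul_def, mul_smul_comm,
      sign_smul_self, Finset.sum_const, Finset.card_univ, Fintype.card_perm, Fintype.card_fin,
      const_apply_nil, const_mul_apply, Nat.factorial_zero, one_mul]
  | succ m ih =>
    obtain ⟨M, rfl⟩ : ∃ M, N = M + 1 := ⟨m + n, by omega⟩
    have sum_insert (i : Fin (M + 1)) :=
      ih (hω.contract (a i)) (h_deg.contract (a i)) (by omega) (a ∘ i.succAbove)
    have sum_contract := hω.sum_contract_mul_ofFn η a
    rw [h_deg.degree_eq, smul_mul_assoc, smul_apply] at sum_contract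
    rw [sum_perm_sign_smul fun v => ω ((List.ofFn v).take (m + 1)) * η ((List.ofFn v).drop (m + 1))]
    simp only [List.ofFn_cons, List.take_succ_cons, List.drop_succ_cons, apply_cons, sum_insert,
      smul_comm _ (m.factorial * n.factorial), ← Finset.smul_sum]
    refine (congrArg _ sum_contract).trans ?_
    rw [smul_smul, Nat.factorial_succ]
    congr 1
    ring

end WedgeAlternating

section Wpow

variable {E : Type*} [AddCommGroup L] [Module ℝ L] [AddCommGroup E] [Module ℝ E] {m n : ℕ}
  {ω η : ListForm L (Module.End ℝ E)}

theorem IsAlternating.wedge_ofFn (hω : IsAlternating ℝ ω) (h_deg : ω.IsHomogeneous m)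
    (hη : IsAlternating ℝ η) (a : Fin (m + n) → L) :
    wedge (fun v : Fin m → L => ω (List.ofFn v)) (fun v : Fin n → L => η (List.ofFn v)) a =
      (ω * η) (List.ofFn a) := by
  have take_ofFn (v : Fin (m + n) → L) :
      (List.ofFn v).take m = List.ofFn fun i => v (Fin.castAdd n i) := by
    rw [List.ofFn_add, List.take_left' List.length_ofFn]
    rfl
  have drop_ofFn (v : Fin (m + n) → L) :
      (List.ofFn v).drop m = List.ofFn fun j => v (Fin.natAdd m j) := by
    rw [List.ofFn_add, List.drop_left' List.length_ofFn]
  have h_sum := hω.sum_perm_take_mul_drop h_deg hη rfl a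
  simp only [take_ofFn, drop_ofFn, Function.comp_apply] at h_sum
  have h_factorial : (m.factorial * n.factorial : ℝ) ≠ 0 := by positivity
  rw [wedge, h_sum, ← Nat.cast_smul_eq_nsmul ℝ, Nat.cast_mul, inv_smul_smul₀ h_factorial]

theorem IsAlternating.wpow_ofFn (hω : IsAlternating ℝ ω) (h_deg : ω.IsHomogeneous 2) (p : ℕ)
    (a : Fin (2 * p) → L) :
    wpow (fun v : Fin 2 → L => ω (List.ofFn v)) p a = (ω ^ p) (List.ofFn a) := by
  induction p with
  | zero => simp [wpow, one_def]
  | succ p ih =>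
    simp only [wpow, funext ih]
    rw [hω.wedge_ofFn h_deg (hω.pow p), pow_succ',
      List.ofFn_congr (show 2 * (p + 1) = 2 + 2 * p by ring)]

end Wpow

end ListForm

section TracePow

variable {M W : Type*} [Ring M] [AddCommGroup W]

theorem map_derivation_pow_mul (t : M →+ W) (d : M →+ M) (hd : ∀ a b, d (a * b) = d a * b + a * d b)
    {S : Subring M} {R : M} (hR : R ∈ S) (hdR : d R ∈ S) (ht : ∀ a ∈ S, t (R * a) = t (a * R))
    (n m : ℕ) : t (d (R ^ (n + 1)) * R ^ m) = (n + 1) • t (d R * R ^ (n + m)) := by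
  have pow_cycle (j : ℕ) {a : M} (ha : a ∈ S) : t (R ^ j * a) = t (a * R ^ j) := by
    induction j generalizing a with
    | zero => simp
    | succ j ih =>
      rw [pow_succ', mul_assoc, ht _ (S.mul_mem (S.pow_mem hR j) ha), mul_assoc,
        ih (S.mul_mem ha hR), mul_assoc]
  induction n generalizing m with
  | zero => simp
  | succ n ih =>
    have h_last : t (R ^ (n + 1) * d R * R ^ m) = t (d R * R ^ (n + 1 + m)) := by
      rw [mul_assoc, pow_cycle _ (S.mul_mem hdR (S.pow_mem hR m)), mul_assoc, ← pow_add, add_comm m]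
    rw [pow_succ R (n + 1), hd, add_mul, map_add, h_last, mul_assoc, ← pow_succ', ih (m + 1),
      succ_nsmul, add_right_comm n 1 m, ← add_assoc, ← succ_nsmul, ← succ_nsmul]

end TracePow

section Curvature

variable {L B V : Type*} [Ring B]

/-- The operators `[D x, ·]` by which a connection `D` on `E` operates on `B = End E`. -/
def commutatorAction (D : L → B) (x : L) : B →+ B :=
  AddMonoidHom.mulLeft (D x) - AddMonoidHom.mulRight (D x)

@[simp] theorem commutatorAction_apply (D : L → B) (x : L) (b : B) :
    commutatorAction D x b = D x * b - b * D x := rfl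

theorem commutatorAction_mul (D : L → B) (x : L) (a b : B) :
    commutatorAction D x (a * b) = commutatorAction D x a * b + a * commutatorAction D x b := by
  simp only [commutatorAction_apply, sub_mul, mul_sub, mul_assoc]
  abel

variable [LieRing L]

/-- The curvature `2`-form of a connection `D` on `E`, with `D` regarded as a map to the ring
`B = End E`. -/
def curvatureForm (D : L → B) : ListForm L B :=
  .twoForm fun x y => D x * D y - D y * D x - D ⁅x, y⁆

theorem map_curvatureForm {B' : Type*} [Ring B'] (f : B →+* B') (D : L → B) :
    (curvatureForm D).map (f : B →+ B') = curvatureForm (f ∘ D) := by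
  simp [curvatureForm, ListForm.map_twoForm]

theorem differential_curvatureForm (D : L →+ B) :
    ListForm.differential (commutatorAction D) (curvatureForm D) = 0 := by
  refine ListForm.differential_twoForm_eq_zero _ _ fun x y z => ?_
  simp only [commutatorAction_apply, leibniz_lie x y z, map_add, sub_mul, mul_sub, mul_assoc]
  abel

theorem differential_oneForm_derivation (δ : B →+ B) (hδ : ∀ a b, δ (a * b) = δ a * b + a * δ b)
    (D : L → B) :
    ListForm.differential (commutatorAction D) (.oneForm fun x => δ (D x)) =
      (curvatureForm D).map δ := by
  rw [ListForm.differential_oneForm, curvatureForm, ListForm.map_twoForm]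
  congr 1
  ext x y
  simp only [commutatorAction_apply, map_sub, hδ]
  abel

theorem differential_map_oneForm_mul_curvatureForm_pow [AddCommGroup V] {act : L → V →+ V}
    {S : Subring B} {T : B →+ V} (hT_comm : ∀ a ∈ S, ∀ b ∈ S, T (a * b) = T (b * a)) (D : L →+ B)
    (hT_act : ∀ x, ∀ s ∈ S, T (D x * s - s * D x) = act x (T s))
    (h_curv : curvatureForm D ∈ ListForm.valuedIn S) (δ : B →+ B)
    (hδ : ∀ a b, δ (a * b) = δ a * b + a * δ b) (hδ_mem : ∀ s ∈ S, δ s ∈ S)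
    (hδD : ∀ x, δ (D x) ∈ S) (n : ℕ) :
    (n + 1) • ListForm.differential act
        (((.oneForm fun x => δ (D x)) * curvatureForm D ^ n : ListForm L B).map T) =
      ((curvatureForm D ^ (n + 1)).map δ).map T := by
  have h_even : (curvatureForm D).involute = curvatureForm D := ListForm.involute_twoForm _
  have h_derivation : ((curvatureForm D ^ (n + 1)).map δ).map T =
      (n + 1) • ((curvatureForm D).map δ * curvatureForm D ^ n).map T := by
    simpa using map_derivation_pow_mul (ListForm.map T) (ListForm.map δ)
      (ListForm.map_derivation_mul δ hδ) h_curv (fun l => hδ_mem _ (h_curv l))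
      (fun η hη => ListForm.map_mul_comm_of_even hT_comm h_curv hη h_even) n 0
  have h_mem := (ListForm.valuedIn S).mul_mem (ListForm.oneForm_mem_valuedIn hδD)
    (pow_mem h_curv n)
  have h_pow : ListForm.differential (commutatorAction D) (curvatureForm D ^ n) = 0 :=
    ListForm.differential_pow_eq_zero (commutatorAction_mul D) (differential_curvatureForm D) n
  rw [h_derivation, ← ListForm.map_differential (commutatorAction D) hT_act h_mem,
    ListForm.differential_mul (commutatorAction_mul D), differential_oneForm_derivation δ hδ,
    h_pow, mul_zero, add_zero]

end Curvature

section Connection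

variable {L B C : Type*} [Ring B]

/-- `D` is a connection on `E`, relative to an operation `ρ` of `L` on `C`. Here `B = End E`, the
action of `C` on `E` is `μ`, and the Leibniz rule reads `[D x, μ c] = μ (ρ x c)`. -/
def IsConnectionOver (μ : C → B) (ρ : L → C → C) (D : L → B) : Prop :=
  ∀ x c, D x * μ c - μ c * D x = μ (ρ x c)

theorem IsConnectionOver.sub_mem_centralizer {μ : C → B} {ρ : L → C → C} {D₀ D₁ : L → B}
    (h₀ : IsConnectionOver μ ρ D₀) (h₁ : IsConnectionOver μ ρ D₁) (x : L) :
    D₁ x - D₀ x ∈ Subring.centralizer (Set.range μ) := by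
  rw [Subring.mem_centralizer_iff, Set.forall_mem_range]
  intro c
  have h_comm : D₁ x * μ c - μ c * D₁ x = D₀ x * μ c - μ c * D₀ x := (h₁ x c).trans (h₀ x c).symm
  rw [mul_sub, sub_mul, ← sub_eq_zero]
  rw [← sub_eq_zero] at h_comm
  rw [← neg_eq_zero, ← h_comm]
  abel

theorem IsConnectionOver.curvatureForm_mem_valuedIn [LieRing L] [AddCommGroup C] {μ : C →+ B}
    {ρ : L → C → C} (hρ : ∀ x y c, ρ ⁅x, y⁆ c = ρ x (ρ y c) - ρ y (ρ x c)) {D : L → B}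
    (hD : IsConnectionOver μ ρ D) :
    curvatureForm D ∈ ListForm.valuedIn (Subring.centralizer (Set.range μ)) := by
  refine ListForm.twoForm_mem_valuedIn fun x y => ?_
  rw [Subring.mem_centralizer_iff, Set.forall_mem_range]
  intro c
  have h_jacobi :
      (D x * D y - D y * D x - D ⁅x, y⁆) * μ c - μ c * (D x * D y - D y * D x - D ⁅x, y⁆) =
        (D x * (D y * μ c - μ c * D y) - (D y * μ c - μ c * D y) * D x) -
        (D y * (D x * μ c - μ c * D x) - (D x * μ c - μ c * D x) * D y) -
        (D ⁅x, y⁆ * μ c - μ c * D ⁅x, y⁆) := by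
    simp only [mul_sub, sub_mul, mul_assoc]
    abel
  simp only [hD _ _, hρ, map_sub, sub_self] at h_jacobi
  exact (sub_eq_zero.1 h_jacobi).symm

end Connection

section PolynomialPath

open Polynomial

section Centralizer

variable {B C : Type*} [Ring B]

theorem mem_centralizer_range_C_comp_iff {μ : C → B} {f : B[X]} :
    f ∈ Subring.centralizer (Set.range (Polynomial.C ∘ μ)) ↔
      ∀ n, f.coeff n ∈ Subring.centralizer (Set.range μ) := by
  simp only [Subring.mem_centralizer_iff, Set.forall_mem_range, Function.comp_apply,
    Polynomial.ext_iff, coeff_C_mul, coeff_mul_C]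
  exact forall_comm

theorem derivative_mem_centralizer_range_C_comp {μ : C → B} {f : B[X]}
    (hf : f ∈ Subring.centralizer (Set.range (Polynomial.C ∘ μ))) :
    derivative f ∈ Subring.centralizer (Set.range (Polynomial.C ∘ μ)) := by
  rw [mem_centralizer_range_C_comp_iff] at hf ⊢
  intro n
  rw [coeff_derivative]
  exact mul_mem (hf _) (add_mem (natCast_mem _ n) (one_mem _))

end Centralizer

section Integrate

variable {k B V : Type*} [Field k] [Ring B] [Algebra k B] [AddCommGroup V] [Module k V]

/-- The integral over `[0, 1]`, in the parameter `X`, of the image of a polynomial under `τ`. -/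
noncomputable def integrate (τ : B →ₗ[k] V) : B[X] →ₗ[k] V :=
  lsum fun n => ((n : k) + 1)⁻¹ • τ

theorem integrate_eq_sum_range (τ : B →ₗ[k] V) {f : B[X]} {N : ℕ} (hN : f.natDegree < N) :
    integrate τ f = ∑ n ∈ Finset.range N, ((n : k) + 1)⁻¹ • τ (f.coeff n) :=
  sum_over_range' _ (fun _ => map_zero _) _ hN

theorem integrate_monomial (τ : B →ₗ[k] V) (n : ℕ) (b : B) :
    integrate τ (monomial n b) = ((n : k) + 1)⁻¹ • τ b :=
  sum_monomial_index _ _ (map_zero _)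

theorem integrate_congr {τ σ : B →ₗ[k] V} {f g : B[X]} (h : ∀ n, τ (f.coeff n) = σ (g.coeff n)) :
    integrate τ f = integrate σ g := by
  rw [integrate_eq_sum_range τ (Nat.lt_succ_of_le (le_max_left f.natDegree g.natDegree)),
    integrate_eq_sum_range σ (Nat.lt_succ_of_le (le_max_right f.natDegree g.natDegree))]
  simp only [h]

theorem map_integrate {W : Type*} [AddCommGroup W] [Module k W] (g : V →ₗ[k] W) (τ : B →ₗ[k] V)
    (f : B[X]) : g (integrate τ f) = integrate (g ∘ₗ τ) f := by
  simp [integrate_eq_sum_range _ f.natDegree.lt_succ_self]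

theorem integrate_mul_comm {S : Subring B} {τ : B →ₗ[k] V}
    (hτ : ∀ a ∈ S, ∀ b ∈ S, τ (a * b) = τ (b * a)) {f g : B[X]} (hf : ∀ n, f.coeff n ∈ S)
    (hg : ∀ n, g.coeff n ∈ S) : integrate τ (f * g) = integrate τ (g * f) := by
  refine integrate_congr fun n => ?_
  rw [coeff_mul, coeff_mul, ← Finset.Nat.sum_antidiagonal_swap, map_sum, map_sum]
  exact Finset.sum_congr rfl fun i _ => hτ _ (hf _) _ (hg _)

/-- Evaluation of a polynomial with coefficients in a `k`-algebra at a scalar. -/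
noncomputable def evalScalar (s : k) : B[X] →+* B :=
  eval₂RingHom' (RingHom.id B) (algebraMap k B s) fun b => (Algebra.commutes s b).symm

theorem evalScalar_monomial (s : k) (n : ℕ) (b : B) : evalScalar s (monomial n b) = s ^ n • b := by
  simp [evalScalar, eval₂RingHom', Algebra.smul_def, ← map_pow, Algebra.commutes]

theorem integrate_derivative [CharZero k] (τ : B →ₗ[k] V) (f : B[X]) :
    integrate τ (derivative f) = τ (evalScalar (1 : k) f) - τ (evalScalar (0 : k) f) := by
  induction f using Polynomial.induction_on' with
  | add f g hf hg => simp only [map_add, hf, hg]; abel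
  | monomial n b =>
    simp only [evalScalar_monomial, derivative_monomial]
    cases n with
    | zero => simp
    | succ n =>
      have h_ne : (n : k) + 1 ≠ 0 := n.cast_add_one_ne_zero
      have h_coeff : b * ((n + 1 : ℕ) : B) = ((n : k) + 1) • b := by
        rw [← nsmul_eq_mul', ← Nat.cast_smul_eq_nsmul k, Nat.cast_succ]
      rw [Nat.add_sub_cancel, integrate_monomial, h_coeff, map_smul, inv_smul_smul₀ h_ne]
      simp

end Integrate

section AffinePath

variable {k L B C : Type*} [Field k] [AddCommGroup L] [Module k L] [Ring B] [Algebra k B]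

/-- The affine path `D₀ + t (D₁ - D₀)`, the parameter `t` being the polynomial variable. -/
noncomputable def affinePath (D₀ D₁ : L →ₗ[k] B) : L →ₗ[k] B[X] :=
  CAlgHom.toLinearMap ∘ₗ D₀ + LinearMap.mulLeft k X ∘ₗ CAlgHom.toLinearMap ∘ₗ (D₁ - D₀)

theorem affinePath_apply (D₀ D₁ : L →ₗ[k] B) (x : L) :
    affinePath D₀ D₁ x = Polynomial.C (D₀ x) + X * Polynomial.C (D₁ x - D₀ x) := rfl

theorem derivative_affinePath (D₀ D₁ : L →ₗ[k] B) (x : L) :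
    derivative (affinePath D₀ D₁ x) = Polynomial.C (D₁ x - D₀ x) := by
  simp [affinePath_apply, -map_sub]

theorem evalScalar_affinePath (D₀ D₁ : L →ₗ[k] B) (s : k) (x : L) :
    evalScalar s (affinePath D₀ D₁ x) = D₀ x + s • (D₁ x - D₀ x) := by
  rw [affinePath_apply, X_mul_C, C_mul_X_eq_monomial, ← monomial_zero_left, map_add,
    evalScalar_monomial, evalScalar_monomial, pow_zero, one_smul, pow_one]

theorem isConnectionOver_affinePath {μ : C → B} {ρ : L → C → C} {D₀ D₁ : L →ₗ[k] B}
    (h₀ : IsConnectionOver μ ρ D₀) (h₁ : IsConnectionOver μ ρ D₁) :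
    IsConnectionOver (Polynomial.C ∘ μ) ρ (affinePath D₀ D₁) := by
  intro x c
  have h_sub := Subring.mem_centralizer_iff.1 (h₀.sub_mem_centralizer h₁ x) _ ⟨c, rfl⟩
  rw [affinePath_apply, add_mul, mul_add, Function.comp_apply, Function.comp_apply, ← h₀ x c,
    ← mul_assoc _ X, ← X_mul_C, mul_assoc, mul_assoc, ← map_mul _ (μ c) (D₁ x - D₀ x), h_sub,
    map_sub Polynomial.C (_ * _), map_mul, map_mul, map_mul]
  abel

theorem IsConnectionOver.derivative_affinePath_mem_centralizer {μ : C → B} {ρ : L → C → C}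
    {D₀ D₁ : L →ₗ[k] B} (h₀ : IsConnectionOver μ ρ D₀) (h₁ : IsConnectionOver μ ρ D₁) (x : L) :
    derivative (affinePath D₀ D₁ x) ∈
      Subring.centralizer (Set.range (Polynomial.C ∘ μ)) := by
  rw [derivative_affinePath, mem_centralizer_range_C_comp_iff]
  intro n
  rw [coeff_C]
  split_ifs
  exacts [h₀.sub_mem_centralizer h₁ x, zero_mem _]

end AffinePath

theorem IsConnectionOver.curvatureForm_affinePath_mem_valuedIn {k L B C : Type*} [Field k]
    [LieRing L] [LieAlgebra k L] [Ring B] [Algebra k B] [AddCommGroup C] {μ : C →+ B}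
    {ρ : L → C → C} (hρ : ∀ x y c, ρ ⁅x, y⁆ c = ρ x (ρ y c) - ρ y (ρ x c)) {D₀ D₁ : L →ₗ[k] B}
    (h₀ : IsConnectionOver μ ρ D₀) (h₁ : IsConnectionOver μ ρ D₁) :
    curvatureForm (affinePath D₀ D₁) ∈
      ListForm.valuedIn (Subring.centralizer (Set.range (Polynomial.C ∘ μ))) :=
  curvatureForm_mem_valuedIn (μ := ((Polynomial.C : B →+* B[X]) : B →+ B[X]).comp μ) hρ
    (isConnectionOver_affinePath h₀ h₁)

end PolynomialPath

section Transgression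

open Polynomial

variable {k L B V : Type*} [Field k] [LieRing L] [LieAlgebra k L] [Ring B] [Algebra k B]
  [AddCommGroup V] [Module k V]

theorem isAlternating_curvatureForm (D : L →ₗ[k] B) :
    (curvatureForm D).IsAlternating k := by
  refine .twoForm (fun y => ⟨fun x x' => ?_, fun r x => ?_⟩)
    (fun x => ⟨fun y y' => ?_, fun r y => ?_⟩) fun x => by simp
  · simp only [map_add, add_lie, add_mul, mul_add]
    abel
  · simp only [map_smul, smul_lie, smul_mul_assoc, mul_smul_comm, smul_sub]
  · simp only [map_add, lie_add, add_mul, mul_add]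
    abel
  · simp only [map_smul, lie_smul, smul_mul_assoc, mul_smul_comm, smul_sub]

/-- The Chern–Simons form of degree `2n + 1` of the affine path from `D₀` to `D₁`. Its defining
integrand is `(n + 1) τ(λ ∧ R_t ^ n)`, where `λ = D₁ - D₀` and `R_t` is the curvature at `t`. -/
noncomputable def chernSimonsForm (τ : B →ₗ[k] V) (D₀ D₁ : L →ₗ[k] B) (n : ℕ) : ListForm L V :=
  (n + 1) • (.oneForm (fun x => derivative (affinePath D₀ D₁ x)) *
    curvatureForm (affinePath D₀ D₁) ^ n : ListForm L B[X]).map (integrate τ : B[X] →+ V)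

theorem isAlternating_chernSimonsForm (τ : B →ₗ[k] V) (D₀ D₁ : L →ₗ[k] B) (n : ℕ) :
    (chernSimonsForm τ D₀ D₁ n).IsAlternating k := by
  have h_oneForm : (ListForm.oneForm fun x => derivative (affinePath D₀ D₁ x)).IsAlternating k :=
    .oneForm ((derivative.restrictScalars k ∘ₗ affinePath D₀ D₁).isLinear)
  exact (h_oneForm.mul ((isAlternating_curvatureForm (affinePath D₀ D₁)).pow n)).map
    ((n + 1) • integrate τ)

theorem map_evalScalar_curvatureForm_affinePath_pow (D₀ D₁ : L →ₗ[k] B) (s : k) (n : ℕ) :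
    (curvatureForm (affinePath D₀ D₁) ^ n).map ((evalScalar s : B[X] →+* B) : B[X] →+ B) =
      curvatureForm (D₀ + s • (D₁ - D₀)) ^ n := by
  rw [ListForm.map_ringHom_pow, map_curvatureForm]
  congr 2
  exact funext fun x => evalScalar_affinePath D₀ D₁ s x

omit [LieRing L] [LieAlgebra k L] in
theorem integrate_commutator_affinePath [AddCommGroup L] [Module k L] {S : Subring B}
    {τ : B →ₗ[k] V} (hτ_comm : ∀ a ∈ S, ∀ b ∈ S, τ (a * b) = τ (b * a)) {D₀ D₁ : L →ₗ[k] B}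
    {x : L} (h_sub : D₁ x - D₀ x ∈ S) {act : V →ₗ[k] V}
    (hτ_act : ∀ s ∈ S, τ (D₀ x * s - s * D₀ x) = act (τ s)) {f : B[X]} (hf : ∀ n, f.coeff n ∈ S) :
    integrate τ (affinePath D₀ D₁ x * f - f * affinePath D₀ D₁ x) = act (integrate τ f) := by
  have h_coeff (n : ℕ) : (X * Polynomial.C (D₁ x - D₀ x)).coeff n ∈ S := by
    rw [X_mul_C, C_mul_X_eq_monomial, coeff_monomial]
    split_ifs
    exacts [h_sub, S.zero_mem]
  have h_tracial : integrate τ (X * Polynomial.C (D₁ x - D₀ x) * f -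
      f * (X * Polynomial.C (D₁ x - D₀ x))) = 0 := by
    rw [map_sub, integrate_mul_comm hτ_comm h_coeff hf, sub_self]
  have h_const : integrate τ (Polynomial.C (D₀ x) * f - f * Polynomial.C (D₀ x)) =
      act (integrate τ f) := by
    rw [map_integrate]
    refine integrate_congr fun n => ?_
    rw [coeff_sub, coeff_C_mul, coeff_mul_C, hτ_act _ (hf n), LinearMap.comp_apply]
  rw [affinePath_apply, add_mul, mul_add, add_sub_add_comm, map_add, h_tracial, h_const, add_zero]

theorem differential_chernSimonsForm [CharZero k] {C : Type*} [AddCommGroup C] {μ : C →+ B}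
    {ρ : L → C → C} (hρ : ∀ x y c, ρ ⁅x, y⁆ c = ρ x (ρ y c) - ρ y (ρ x c)) {D₀ D₁ : L →ₗ[k] B}
    (h₀ : IsConnectionOver μ ρ D₀) (h₁ : IsConnectionOver μ ρ D₁) {τ : B →ₗ[k] V}
    (hτ_comm : ∀ a ∈ Subring.centralizer (Set.range μ), ∀ b ∈ Subring.centralizer (Set.range μ),
      τ (a * b) = τ (b * a))
    {act : L → V →ₗ[k] V}
    (hτ_act : ∀ x, ∀ s ∈ Subring.centralizer (Set.range μ),
      τ (D₀ x * s - s * D₀ x) = act x (τ s)) (n : ℕ) :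
    ListForm.differential (fun x => (act x : V →+ V)) (chernSimonsForm τ D₀ D₁ n) =
      (curvatureForm D₁ ^ (n + 1)).map (τ : B →+ V) -
        (curvatureForm D₀ ^ (n + 1)).map (τ : B →+ V) := by
  have h_sub := h₀.sub_mem_centralizer h₁
  have h_derivation := differential_map_oneForm_mul_curvatureForm_pow
    (act := fun x => (act x : V →+ V)) (T := (integrate τ : B[X] →+ V))
    (fun f hf g hg => integrate_mul_comm hτ_comm (mem_centralizer_range_C_comp_iff.1 hf)
      (mem_centralizer_range_C_comp_iff.1 hg))
    (affinePath D₀ D₁ : L →+ B[X])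
    (fun x f hf => integrate_commutator_affinePath hτ_comm (h_sub x) (hτ_act x)
      (mem_centralizer_range_C_comp_iff.1 hf))
    (h₀.curvatureForm_affinePath_mem_valuedIn hρ h₁)
    ((derivative : B[X] →ₗ[B] B[X]) : B[X] →+ B[X]) (fun f g => derivative_mul)
    (fun f => derivative_mem_centralizer_range_C_comp)
    (h₀.derivative_affinePath_mem_centralizer h₁) n
  rw [chernSimonsForm, map_nsmul]
  refine h_derivation.trans (ListForm.ext fun l => ?_)
  have h_one := map_evalScalar_curvatureForm_affinePath_pow D₀ D₁ (1 : k) (n + 1)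
  have h_zero := map_evalScalar_curvatureForm_affinePath_pow D₀ D₁ (0 : k) (n + 1)
  rw [one_smul, add_sub_cancel] at h_one
  rw [zero_smul, add_zero] at h_zero
  rw [← h_one, ← h_zero]
  exact integrate_derivative τ _

end Transgression

section Trace

open LinearMap (trace)

theorem apply_eq_constr_add_sum_repr {ι C E : Type*} [Fintype ι] [CommRing C] [AddCommGroup E]
    [Module C E] (b : Basis ι C E) {r : C → C} {D : E →+ E}
    (hD : ∀ (f : C) (e : E), D (f • e) = f • D e + r f • e) (e : E) :
    D e = b.constr C (D ∘ b) e + ∑ i, r (b.repr e i) • b i := by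
  conv_lhs => rw [← b.sum_repr e, map_sum]
  simp only [hD, Finset.sum_add_distrib, b.constr_apply_fintype C, b.equivFun_apply,
    Function.comp_apply]

theorem trace_eq_apply_trace_of_eq_commutator {C E : Type*} [CommRing C] [AddCommGroup E]
    [Module C E] [Module.Finite C E] [Module.Free C E] {r : C →+ C} {D : E →+ E}
    (hD : ∀ (f : C) (e : E), D (f • e) = f • D e + r f • e) {g g' : E →ₗ[C] E}
    (hg : ∀ e, g' e = D (g e) - g (D e)) : trace C E g' = r (trace C E g) := by
  let b := Module.Free.chooseBasis C E
  let Γ : E →ₗ[C] E := b.constr C (D ∘ b)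
  have hΓ (i) : D (b i) = Γ (b i) := (b.constr_basis C (D ∘ b) i).symm
  have diag_eq (i) :
      b.repr (g' (b i)) i = b.repr ((Γ * g - g * Γ) (b i)) i + r (b.repr (g (b i)) i) := by
    have h_sum : b.repr (∑ j, r (b.repr (g (b i)) j) • b j) i = r (b.repr (g (b i)) i) :=
      congrFun (b.repr_sum_self fun j => r (b.repr (g (b i)) j)) i
    rw [hg, apply_eq_constr_add_sum_repr b hD (g (b i)), hΓ, add_sub_right_comm, map_add,
      Finsupp.add_apply, h_sum]
    rfl
  have h_trace : trace C E g' = trace C E (Γ * g - g * Γ) + r (trace C E g) := by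
    simp only [LinearMap.trace_eq_matrix_trace C b, Matrix.trace, Matrix.diag,
      LinearMap.toMatrix_apply, map_sum, ← Finset.sum_add_distrib]
    exact Finset.sum_congr rfl fun i _ => diag_eq i
  rw [h_trace, map_sub, LinearMap.trace_mul_comm C Γ g, sub_self, zero_add]

variable {C E : Type*} [CommRing C] [Algebra ℝ C] [AddCommGroup E] [Module ℝ E] [Module C E]

theorem trR_restrictScalars [IsScalarTower ℝ C E] (g : E →ₗ[C] E) :
    trR C (g.restrictScalars ℝ) = trace C E g := by
  have h_exists : ∃ g' : E →ₗ[C] E, ⇑g' = ⇑(g.restrictScalars ℝ) := ⟨g, rfl⟩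
  rw [trR, dif_pos h_exists]
  exact congrArg _ (DFunLike.coe_injective h_exists.choose_spec)

theorem exists_linearMap_restrictScalars_eq_trace [IsScalarTower ℝ C E] :
    ∃ τ : Module.End ℝ E →ₗ[ℝ] C, ∀ g : E →ₗ[C] E, τ (g.restrictScalars ℝ) = trace C E g := by
  have : SMulCommClass C ℝ E := (IsScalarTower.to_smulCommClass : SMulCommClass ℝ C E).symm
  obtain ⟨π, hπ⟩ := LinearMap.exists_leftInverse_of_injective (LinearMap.restrictScalarsₗ ℝ C E E ℝ)
    (LinearMap.ker_eq_bot.2 (LinearMap.restrictScalars_injective ℝ))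
  exact ⟨(trace C E).restrictScalars ℝ ∘ₗ π,
    fun g => congrArg (trace C E) (LinearMap.congr_fun hπ g)⟩

theorem mem_centralizer_range_lsmul_iff [IsScalarTower ℝ C E] {φ : Module.End ℝ E} :
    φ ∈ Subring.centralizer (Set.range (Algebra.lsmul ℝ ℝ E : C → Module.End ℝ E)) ↔
      ∃ g : E →ₗ[C] E, g.restrictScalars ℝ = φ := by
  rw [Subring.mem_centralizer_iff, Set.forall_mem_range]
  constructor
  · intro h
    exact ⟨{ φ with map_smul' := fun c e => (LinearMap.congr_fun (h c) e).symm }, rfl⟩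
  · rintro ⟨g, rfl⟩ c
    ext e
    exact (g.map_smul c e).symm

theorem IsConn.isConnectionOver [IsScalarTower ℝ C E] {L : Type*} [LieRing L] [LieAlgebra ℝ L]
    {ρ : L →ₗ[ℝ] Derivation ℝ C C} {D : L →ₗ[ℝ] Module.End ℝ E} (hD : IsConn ρ D) :
    IsConnectionOver (Algebra.lsmul ℝ ℝ E : C → Module.End ℝ E) (fun x => ρ x) D := by
  intro x f
  ext e
  exact sub_eq_of_eq_add' (hD x f e)

section ExtendedTrace

variable [IsScalarTower ℝ C E] {τ : Module.End ℝ E →ₗ[ℝ] C}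
  (hτ : ∀ g : E →ₗ[C] E, τ (g.restrictScalars ℝ) = trace C E g)

include hτ

theorem apply_mul_comm_of_restrictScalars_eq_trace {φ ψ : Module.End ℝ E}
    (hφ : φ ∈ Subring.centralizer (Set.range (Algebra.lsmul ℝ ℝ E : C → Module.End ℝ E)))
    (hψ : ψ ∈ Subring.centralizer (Set.range (Algebra.lsmul ℝ ℝ E : C → Module.End ℝ E))) :
    τ (φ * ψ) = τ (ψ * φ) := by
  obtain ⟨f, rfl⟩ := mem_centralizer_range_lsmul_iff.1 hφ
  obtain ⟨g, rfl⟩ := mem_centralizer_range_lsmul_iff.1 hψ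
  exact (hτ (f * g)).trans ((LinearMap.trace_mul_comm C f g).trans (hτ (g * f)).symm)

theorem apply_commutator_of_restrictScalars_eq_trace [Module.Finite C E] [Module.Free C E]
    {r : C →+ C} {D : Module.End ℝ E} (hD : ∀ (f : C) (e : E), D (f • e) = f • D e + r f • e)
    {φ : Module.End ℝ E}
    (hφ : φ ∈ Subring.centralizer (Set.range (Algebra.lsmul ℝ ℝ E : C → Module.End ℝ E))) :
    τ (D * φ - φ * D) = r (τ φ) := by
  obtain ⟨g, rfl⟩ := mem_centralizer_range_lsmul_iff.1 hφ
  let g' : E →ₗ[C] E :=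
    { D * g.restrictScalars ℝ - g.restrictScalars ℝ * D with
      map_smul' := fun f e => by
        change D (g (f • e)) - g (D (f • e)) = f • (D (g e) - g (D e))
        rw [map_smul, hD, hD, map_add, map_smul, map_smul, smul_sub]
        abel }
  rw [hτ]
  exact (hτ g').trans (trace_eq_apply_trace_of_eq_commutator (D := (D : E →+ E)) hD fun _ => rfl)

theorem trR_eq_of_mem_centralizer {φ : Module.End ℝ E}
    (hφ : φ ∈ Subring.centralizer (Set.range (Algebra.lsmul ℝ ℝ E : C → Module.End ℝ E))) :
    trR C φ = τ φ := by
  obtain ⟨g, rfl⟩ := mem_centralizer_range_lsmul_iff.1 hφ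
  rw [trR_restrictScalars, hτ]

end ExtendedTrace

end Trace

section ChernCharacter

variable {L C E : Type*} [LieRing L] [LieAlgebra ℝ L] [CommRing C] [Algebra ℝ C]
  [AddCommGroup E] [Module ℝ E] [Module C E]

omit [AddCommGroup E] [Module ℝ E] [Module C E] in
theorem dRho_toAlternatingMap (ρ : L →ₗ[ℝ] Derivation ℝ C C) {ω : ListForm L C}
    (hω : ω.IsAlternating ℝ) {n : ℕ} (a : Fin (n + 1) → L) :
    dRho ρ (hω.toAlternatingMap n) a =
      ListForm.differential (fun x => ((ρ x : C →ₗ[ℝ] C) : C →+ C)) ω (List.ofFn a) :=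
  hω.dGen_ofFn (fun x => ((ρ x : C →ₗ[ℝ] C) : C →+ C)) a

theorem curv2_eq_curvatureForm (D : L →ₗ[ℝ] Module.End ℝ E) :
    curv2 D = fun a => curvatureForm D (List.ofFn a) := by
  ext1 a
  simp only [List.ofFn_succ, List.ofFn_zero]
  rfl

theorem chp_eq_map_curvatureForm_pow [IsScalarTower ℝ C E] {ρ : L →ₗ[ℝ] Derivation ℝ C C}
    (hρ : ∀ (a b : L) (f : C), ρ ⁅a, b⁆ f = ρ a (ρ b f) - ρ b (ρ a f))
    {τ : Module.End ℝ E →ₗ[ℝ] C}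
    (hτ : ∀ g : E →ₗ[C] E, τ (g.restrictScalars ℝ) = LinearMap.trace C E g)
    {D : L →ₗ[ℝ] Module.End ℝ E} (hD : IsConn ρ D) (p : ℕ) (a : Fin (2 * p) → L) :
    chp C D p a =
      (curvatureForm D ^ p).map (τ : Module.End ℝ E →+ C) (List.ofFn a) := by
  have h_curv : curvatureForm D ∈ ListForm.valuedIn _ :=
    IsConnectionOver.curvatureForm_mem_valuedIn
      (μ := ((Algebra.lsmul ℝ ℝ E : C →ₐ[ℝ] Module.End ℝ E) : C →+ Module.End ℝ E))
      hρ hD.isConnectionOver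
  rw [chp, curv2_eq_curvatureForm, (isAlternating_curvatureForm D).wpow_ofFn
    (ListForm.isHomogeneous_twoForm _), trR_eq_of_mem_centralizer hτ (pow_mem h_curv p _)]
  rfl

end ChernCharacter

theorem stmt7_general {L : Type*} {C : Type*} {E : Type*}
    [LieRing L] [LieAlgebra ℝ L] [CommRing C] [Algebra ℝ C]
    [AddCommGroup E] [Module ℝ E] [Module C E] [IsScalarTower ℝ C E]
    [Module.Finite C E] [Module.Free C E]
    (ρ : L →ₗ[ℝ] Derivation ℝ C C)
    (hρ : ∀ (a b : L) (f : C), ρ ⁅a, b⁆ f = ρ a (ρ b f) - ρ b (ρ a f))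
    (D0 D1 : L →ₗ[ℝ] Module.End ℝ E) (h0 : IsConn ρ D0) (h1 : IsConn ρ D1)
    (n : ℕ) :
    ∃ η : AlternatingMap ℝ L C (Fin (2 * n + 1)),
      ∀ a : Fin (2 * (n + 1)) → L, dRho ρ η a = chp C D1 (n + 1) a - chp C D0 (n + 1) a := by
  obtain ⟨τ, hτ⟩ := exists_linearMap_restrictScalars_eq_trace (C := C) (E := E)
  have h_alternating := isAlternating_chernSimonsForm τ D0 D1 n
  have h_differential := differential_chernSimonsForm
    (μ := ((Algebra.lsmul ℝ ℝ E : C →ₐ[ℝ] Module.End ℝ E) : C →+ Module.End ℝ E))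
    (act := fun x => (ρ x : C →ₗ[ℝ] C)) hρ h0.isConnectionOver h1.isConnectionOver
    (fun φ hφ ψ hψ => apply_mul_comm_of_restrictScalars_eq_trace hτ hφ hψ)
    (fun x φ hφ => apply_commutator_of_restrictScalars_eq_trace hτ
      (r := ((ρ x : C →ₗ[ℝ] C) : C →+ C)) (h0 x) hφ) n
  refine ⟨h_alternating.toAlternatingMap _, fun a => ?_⟩
  rw [dRho_toAlternatingMap, h_differential, ListForm.sub_apply,
    chp_eq_map_curvatureForm_pow hρ hτ h1, chp_eq_map_curvatureForm_pow hρ hτ h0]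

/-- `ch_p(∇¹) − ch_p(∇⁰)` is `d_ρ`-exact, so the Chern character class
does not depend on the choice of the ℝ-linear connection. -/
theorem stmt7 {L : Type*} {C : Type*} {E : Type*}
    [LieRing L] [LieAlgebra ℝ L] [CommRing C] [Algebra ℝ C] [Module C L]
    [AddCommGroup E] [Module ℝ E] [Module C E] [IsScalarTower ℝ C E]
    [Module.Finite C E] [Module.Free C E]
    (ρ : L →ₗ[ℝ] Derivation ℝ C C)
    (hρ : ∀ (a b : L) (f : C), ρ ⁅a, b⁆ f = ρ a (ρ b f) - ρ b (ρ a f))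
    (hLeib : ∀ (a b : L) (f : C), ⁅a, f • b⁆ = f • ⁅a, b⁆ + ρ a f • b)
    (D0 D1 : L →ₗ[ℝ] Module.End ℝ E) (h0 : IsConn ρ D0) (h1 : IsConn ρ D1)
    (p : ℕ) (hp : 1 ≤ p) :
    ∃ η : AlternatingMap ℝ L C (Fin (2 * p - 1)),
      ∀ a : Fin (2 * p) → L,
        dRho ρ (⇑η) (fun i => a (Fin.cast (by omega) i))
          = chp C D1 p a - chp C D0 p a := by
  obtain ⟨n, rfl⟩ := Nat.exists_eq_add_of_le' hp
  exact stmt7_general ρ hρ D0 D1 h0 h1 n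
end

section
/- Let ∇⁰, ∇¹ : L → End_ℝ(E) be ℝ-linear maps, λ = ∇¹ − ∇⁰, and for t ∈ ℝ set ∇^t = ∇⁰ + t•λ. Then for all a,b ∈ L: R^{∇^t}(a,b) = (1−t)·R^{∇⁰}(a,b) + t·R^{∇¹}(a,b) + (t²−t)·[λ(a), λ(b)], where [·,·] is the commutator in End_ℝ(E). -/
open Module

/-! The curvature of `D + t • A`, evaluated at `a` and `b`, is a quadratic polynomial in `t` with
constant term `curv D a b` and leading coefficient `⁅A a, A b⁆`; its linear coefficient is the
covariant differential of `A`. For `A = D1 - D0` the value at `t = 1` is `curv D1 a b`, which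
determines that coefficient. -/

theorem dGen_smul {L V R : Type*} [LieRing L] [AddCommGroup V] [Monoid R]
    [DistribMulAction R V] {act : L → V → V} {r : R}
    (hact : ∀ x v, act x (r • v) = r • act x v) {n : ℕ} (ω : (Fin n → L) → V) :
    dGen act (r • ω) = r • dGen act ω := by
  funext a
  cases n with
  | zero => exact hact _ _
  | succ m =>
    simp only [dGen, Pi.smul_apply, hact, smul_add, Finset.smul_sum, smul_dite, smul_zero,
      smul_comm r]

theorem dGen_one_form_apply {L V : Type*} [LieRing L] [AddCommGroup V] (act : L → V → V)
    (ω : L → V) (a b : L) :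
    dGen act (fun v : Fin 1 → L => ω (v 0)) ![a, b]
      = act a (ω b) - act b (ω a) - ω ⁅a, b⁆ := by
  simp [dGen, Fin.sum_univ_two, sub_eq_add_neg]

section CurvaturePerturbation

variable {L E : Type*} [LieRing L] [LieAlgebra ℝ L] [AddCommGroup E] [Module ℝ E]

theorem dEnd_smul (D : L →ₗ[ℝ] Module.End ℝ E) (t : ℝ) {n : ℕ}
    (ω : (Fin n → L) → Module.End ℝ E) : dEnd D (t • ω) = t • dEnd D ω :=
  dGen_smul (fun x φ => by rw [mul_smul_comm, smul_mul_assoc, smul_sub]) ω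

theorem dEnd_one_form_apply (D : L →ₗ[ℝ] Module.End ℝ E)
    (ω : L → Module.End ℝ E) (a b : L) :
    dEnd D (fun v : Fin 1 → L => ω (v 0)) ![a, b] = ⁅D a, ω b⁆ - ⁅D b, ω a⁆ - ω ⁅a, b⁆ :=
  dGen_one_form_apply _ ω a b

theorem curv_add (D A : L →ₗ[ℝ] Module.End ℝ E) (a b : L) :
    curv (D + A) a b
      = curv D a b + dEnd D (fun v : Fin 1 → L => A (v 0)) ![a, b] + ⁅A a, A b⁆ := by
  simp only [dEnd_one_form_apply, curv, LinearMap.add_apply,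
    LieRing.of_associative_ring_bracket]
  noncomm_ring

theorem curv_add_smul (D A : L →ₗ[ℝ] Module.End ℝ E) (t : ℝ) (a b : L) :
    curv (D + t • A) a b
      = curv D a b + t • dEnd D (fun v : Fin 1 → L => A (v 0)) ![a, b] + t ^ 2 • ⁅A a, A b⁆ := by
  have h_linear : dEnd D (fun v : Fin 1 → L => (t • A) (v 0)) ![a, b]
      = t • dEnd D (fun v : Fin 1 → L => A (v 0)) ![a, b] :=
    congrFun (dEnd_smul D t _) _
  have h_quadratic : ⁅(t • A) a, (t • A) b⁆ = t ^ 2 • ⁅A a, A b⁆ := by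
    simp only [LinearMap.smul_apply, LieRing.of_associative_ring_bracket,
      smul_mul_smul_comm, ← sq, smul_sub]
  rw [curv_add, h_linear, h_quadratic]

end CurvaturePerturbation

/-- `R^{∇^t} = (1−t)·R^{∇⁰} + t·R^{∇¹} + (t²−t)·[λ,λ]` where
`λ = ∇¹ − ∇⁰` and `∇^t = ∇⁰ + t•λ`. -/
theorem stmt9 {L : Type*} {E : Type*} [LieRing L] [LieAlgebra ℝ L]
    [AddCommGroup E] [Module ℝ E]
    (D0 D1 : L →ₗ[ℝ] Module.End ℝ E) (t : ℝ) (a b : L) :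
    curv (D0 + t • (D1 - D0)) a b
      = (1 - t) • curv D0 a b + t • curv D1 a b
        + (t ^ 2 - t) • ((D1 - D0) a * (D1 - D0) b - (D1 - D0) b * (D1 - D0) a) := by
  set A := D1 - D0
  have h_endpoint : curv D1 a b
      = curv D0 a b + dEnd D0 (fun v : Fin 1 → L => A (v 0)) ![a, b] + ⁅A a, A b⁆ := by
    rw [← curv_add, add_sub_cancel]
  rw [curv_add_smul, h_endpoint, ← LieRing.of_associative_ring_bracket]
  module
end

section
/- For every p ≥ 1: ch_p(∇^h) = (−1)^p · ch_p(∇). -/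
open Module

/-!
Differentiating the adjointness relation twice shows that the curvature of `∇^h` is minus the
`h`-adjoint of the curvature of `∇`. Passing to adjoints reverses the order of a product, so
`(R^∇)^{∧p}` is adjoint to the wedge power of `-R^{∇^h}` with its factors in reverse order.
The order is immaterial: reversing blocks of even length is an even permutation of the arguments,
as one sees on the expansion `R^{∧p}(a) = 2^{-p} Σ_τ sgn τ · R(a_{τ(1)}, a_{τ(2)}) ⋯`. Finally, as
`h` identifies `E` with its dual, adjoint endomorphisms have the same trace.
-/

section AlternatingSum

variable {ι κ L A : Type*} [Fintype ι] [DecidableEq ι] [Fintype κ] [DecidableEq κ]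
  [AddCommGroup A]

/-- The antisymmetrization `Σ_τ sgn τ · F(a_{τ(·)})`, without the factor `1 / |ι|!`, of a function
`F` of an `ι`-indexed family. -/
def alternatingSum (F : (ι → L) → A) (a : ι → L) : A :=
  ∑ τ : Equiv.Perm ι, (Equiv.Perm.sign τ : ℤ) • F (a ∘ τ)

theorem alternatingSum_comp_perm (F : (ι → L) → A) (σ : Equiv.Perm ι) (a : ι → L) :
    alternatingSum (fun b ↦ F (b ∘ σ)) a = (Equiv.Perm.sign σ : ℤ) • alternatingSum F a := by
  symm
  unfold alternatingSum
  rw [Finset.smul_sum, ← Equiv.sum_comp (Equiv.mulRight σ)]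
  refine Finset.sum_congr rfl fun τ _ ↦ ?_
  rw [Equiv.coe_mulRight, Equiv.Perm.sign_mul, smul_smul, ← Units.val_mul, mul_left_comm,
    Int.units_mul_self, mul_one]
  rfl

theorem alternatingSum_comp_equiv (F : (κ → L) → A) (e : κ ≃ ι) (a : ι → L) :
    alternatingSum (fun b ↦ F (b ∘ e)) a = alternatingSum F (a ∘ e) := by
  unfold alternatingSum
  rw [← Equiv.sum_comp e.permCongr]
  refine Finset.sum_congr rfl fun τ _ ↦ ?_
  rw [Equiv.Perm.sign_permCongr]
  have : (a ∘ e.permCongr τ) ∘ e = (a ∘ e) ∘ τ := by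
    ext i
    simp only [Function.comp_apply, Equiv.permCongr_apply, Equiv.symm_apply_apply]
  simp only [this]

-- Antisymmetrizing `F` first changes nothing up to the factor `|κ|!`, since each permutation of `κ`
-- extends to one of `ι ⊕ κ` of the same sign, which the outer sum absorbs.
theorem alternatingSum_mul_alternatingSum {B : Type*} [Ring B] (G : (ι → L) → B)
    (F : (κ → L) → B) (a : ι ⊕ κ → L) :
    alternatingSum (fun b ↦ G (b ∘ Sum.inl) * alternatingSum F (b ∘ Sum.inr)) a =
      (Fintype.card κ).factorial •
        alternatingSum (fun b ↦ G (b ∘ Sum.inl) * F (b ∘ Sum.inr)) a := by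
  let H (b : ι ⊕ κ → L) : B := G (b ∘ Sum.inl) * F (b ∘ Sum.inr)
  calc
    _ = ∑ σ : Equiv.Perm κ, (Equiv.Perm.sign σ : ℤ) •
          alternatingSum (fun b ↦ H (b ∘ Equiv.Perm.sumCongr 1 σ)) a := by
      simp only [alternatingSum, Finset.mul_sum, Finset.smul_sum, mul_smul_comm]
      rw [Finset.sum_comm]
      exact Finset.sum_congr rfl fun σ _ ↦ Finset.sum_congr rfl fun τ _ ↦ smul_comm _ _ _
    _ = ∑ _σ : Equiv.Perm κ, alternatingSum H a := by
      refine Finset.sum_congr rfl fun σ _ ↦ ?_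
      rw [alternatingSum_comp_perm, Equiv.Perm.sign_sumCongr, map_one, one_mul, smul_smul,
        ← Units.val_mul, Int.units_mul_self, Units.val_one, one_smul]
    _ = (Fintype.card κ).factorial • alternatingSum H a := by
      rw [Finset.sum_const, Finset.card_univ, Fintype.card_perm]

end AlternatingSum

section BlockProd

variable {κ L A : Type*} [Monoid A]

/-- The ordered product `R(b_{0,·}) · R(b_{1,·}) ⋯ R(b_{p-1,·})` of the values of `R` on the rows
of a family `b` indexed by `Fin p × κ`. -/
def blockProd (R : (κ → L) → A) (p : ℕ) (b : Fin p × κ → L) : A :=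
  ((List.finRange p).map fun i ↦ R fun j ↦ b (i, j)).prod

theorem blockProd_succ (R : (κ → L) → A) (p : ℕ) (b : Fin (p + 1) × κ → L) :
    blockProd R (p + 1) b =
      R (fun j ↦ b (0, j)) * blockProd R p (b ∘ Prod.map Fin.succ id) := by
  simp only [blockProd, List.finRange_succ, List.map_cons, List.prod_cons, List.map_map]
  rfl

end BlockProd

/-- Reversal of the order of `p` blocks, each of them indexed by `κ`. -/
def blockRev (p : ℕ) (κ : Type*) : Equiv.Perm (Fin p × κ) :=
  Equiv.prodCongrLeft fun _ ↦ Fin.revPerm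

theorem blockProd_comp_blockRev {κ L A : Type*} [Monoid A] (R : (κ → L) → A) (p : ℕ)
    (b : Fin p × κ → L) :
    blockProd R p (b ∘ blockRev p κ) =
      ((List.finRange p).map fun i ↦ R fun j ↦ b (i, j)).reverse.prod := by
  rw [← List.map_reverse, List.finRange_reverse, List.map_map]
  rfl

theorem sign_blockRev (p : ℕ) {κ : Type*} [Fintype κ] [DecidableEq κ]
    (hκ : Even (Fintype.card κ)) : Equiv.Perm.sign (blockRev p κ) = 1 := by
  rw [blockRev, Equiv.Perm.sign_prodCongrLeft, Finset.prod_const, Finset.card_univ]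
  obtain ⟨k, hk⟩ := hκ
  rw [hk, pow_add, Int.units_mul_self]

theorem alternatingSum_blockProd_eq_reverse {κ L A : Type*} [Fintype κ] [DecidableEq κ] [Ring A]
    (hκ : Even (Fintype.card κ)) (R : (κ → L) → A) (p : ℕ) (a : Fin p × κ → L) :
    alternatingSum (blockProd R p) a =
      alternatingSum
        (fun b ↦ ((List.finRange p).map fun i ↦ R fun j ↦ b (i, j)).reverse.prod) a := by
  simp_rw [← blockProd_comp_blockRev]
  rw [alternatingSum_comp_perm, sign_blockRev p hκ, Units.val_one, one_smul]

section Wedge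

variable {L E : Type*} [AddCommGroup E] [Module ℝ E]

theorem wedge_smul_left {m n : ℕ} (c : ℝ) (ω : (Fin m → L) → Module.End ℝ E)
    (η : (Fin n → L) → Module.End ℝ E) : wedge (c • ω) η = c • wedge ω η := by
  ext1 a
  simp only [wedge, Pi.smul_apply, smul_mul_assoc, smul_comm _ c, ← Finset.smul_sum]

theorem wedge_smul_right {m n : ℕ} (c : ℝ) (ω : (Fin m → L) → Module.End ℝ E)
    (η : (Fin n → L) → Module.End ℝ E) : wedge ω (c • η) = c • wedge ω η := by
  ext1 a
  simp only [wedge, Pi.smul_apply, mul_smul_comm, smul_comm _ c, ← Finset.smul_sum]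

theorem wedge_alternatingSum {m n : ℕ} (ω : (Fin m → L) → Module.End ℝ E)
    (F : (Fin n → L) → Module.End ℝ E) :
    wedge ω (alternatingSum F) = (m.factorial : ℝ)⁻¹ •
      alternatingSum fun b ↦ ω (b ∘ Fin.castAdd n) * F (b ∘ Fin.natAdd m) := by
  ext1 a
  have absorb : alternatingSum (fun b ↦ ω (b ∘ Fin.castAdd n) *
        alternatingSum F (b ∘ Fin.natAdd m)) a =
      (n.factorial : ℝ) •
        alternatingSum (fun b ↦ ω (b ∘ Fin.castAdd n) * F (b ∘ Fin.natAdd m)) a := by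
    have := alternatingSum_mul_alternatingSum ω F (a ∘ finSumFinEquiv)
    rw [← alternatingSum_comp_equiv, ← alternatingSum_comp_equiv, Fintype.card_fin] at this
    rw [Nat.cast_smul_eq_nsmul]
    exact this
  calc
    wedge ω (alternatingSum F) a = (m.factorial * n.factorial : ℝ)⁻¹ •
        alternatingSum (fun b ↦ ω (b ∘ Fin.castAdd n) *
          alternatingSum F (b ∘ Fin.natAdd m)) a := rfl
    _ = (m.factorial : ℝ)⁻¹ •
        alternatingSum (fun b ↦ ω (b ∘ Fin.castAdd n) * F (b ∘ Fin.natAdd m)) a := by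
      rw [absorb, smul_smul, mul_inv, inv_mul_cancel_right₀ (by positivity)]

/-- The indexing of `2 * p` arguments by consecutive pairs, `(i, j) ↦ 2 * i + j`. -/
def pairIndex (p : ℕ) : Fin p × Fin 2 ≃ Fin (2 * p) :=
  finProdFinEquiv.trans (finCongr (mul_comm p 2))

theorem wpow_eq_smul_alternatingSum (R : (Fin 2 → L) → Module.End ℝ E) (p : ℕ)
    (a : Fin (2 * p) → L) :
    wpow R p a = ((2 : ℝ) ^ p)⁻¹ • alternatingSum (blockProd R p) (a ∘ pairIndex p) := by
  induction p with
  | zero => simp [wpow, alternatingSum, blockProd]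
  | succ p ih =>
    have wpow_eq : wpow R p = ((2 : ℝ) ^ p)⁻¹ •
        alternatingSum fun b ↦ blockProd R p (b ∘ pairIndex p) := by
      ext1 b
      rw [ih, Pi.smul_apply, alternatingSum_comp_equiv]
    let e : Fin (p + 1) × Fin 2 ≃ Fin (2 + 2 * p) :=
      (pairIndex (p + 1)).trans (finCongr (by omega))
    have e_zero (j : Fin 2) : e (0, j) = Fin.castAdd (2 * p) j := by
      ext
      simp [e, pairIndex]
    have e_succ (i : Fin p) (j : Fin 2) : e (i.succ, j) = Fin.natAdd 2 (pairIndex p (i, j)) := by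
      ext
      simp only [e, pairIndex, Equiv.trans_apply, finCongr_apply, Fin.cast_cast, Fin.val_cast,
        finProdFinEquiv_apply_val, Fin.val_succ, Fin.val_natAdd]
      ring
    have blockProd_comp_e (b : Fin (2 + 2 * p) → L) : blockProd R (p + 1) (b ∘ e) =
        R (b ∘ Fin.castAdd (2 * p)) * blockProd R p ((b ∘ Fin.natAdd 2) ∘ pairIndex p) := by
      have tail_eq : (b ∘ e) ∘ Prod.map Fin.succ id = (b ∘ Fin.natAdd 2) ∘ pairIndex p :=
        funext fun x ↦ congrArg b (e_succ x.1 x.2)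
      simp only [blockProd_succ, tail_eq, Function.comp_apply, e_zero]
      rfl
    rw [wpow, wpow_eq, wedge_smul_right, wedge_alternatingSum]
    simp only [← blockProd_comp_e]
    rw [smul_smul, Pi.smul_apply, alternatingSum_comp_equiv, Nat.factorial_two, pow_succ, mul_inv]
    rfl

theorem wpow_smul (c : ℝ) (R : (Fin 2 → L) → Module.End ℝ E) (p : ℕ) :
    wpow (c • R) p = c ^ p • wpow R p := by
  induction p with
  | zero => rw [pow_zero, one_smul]; rfl
  | succ p ih =>
    ext1 a
    simp only [wpow, ih, wedge_smul_left, wedge_smul_right, smul_smul, pow_succ, Pi.smul_apply]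

theorem wpow_neg (R : (Fin 2 → L) → Module.End ℝ E) (p : ℕ) :
    wpow (-R) p = (-1 : ℤ) ^ p • wpow R p := by
  rw [← Int.cast_smul_eq_zsmul ℝ, Int.cast_pow, Int.cast_neg, Int.cast_one, ← wpow_smul,
    neg_one_smul]

theorem wpow_mem {S : Subalgebra ℝ (Module.End ℝ E)} {R : (Fin 2 → L) → Module.End ℝ E}
    (hR : ∀ v, R v ∈ S) (p : ℕ) (a : Fin (2 * p) → L) : wpow R p a ∈ S := by
  induction p with
  | zero => exact S.one_mem
  | succ p ih => exact S.smul_mem (sum_mem fun _ _ ↦ zsmul_mem (mul_mem (hR _) (ih _)) _) _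

end Wedge

section Adjoint

variable {R S ι κ L M N : Type*} [CommRing R] [AddCommGroup M] [Module R M] [AddCommGroup N]
  [Module R N] {B : M →ₗ[R] M →ₗ[R] N} [Semiring S] [Module S M]

theorem isAdjointPair_list_prod {f g : ι → Module.End S M}
    (hfg : ∀ i, LinearMap.IsAdjointPair B B (f i) (g i)) (l : List ι) :
    LinearMap.IsAdjointPair B B (l.map f).prod (l.map g).reverse.prod := by
  induction l with
  | nil => exact LinearMap.isAdjointPair_id
  | cons i l ih =>
    rw [List.map_cons, List.prod_cons, List.map_cons, List.reverse_cons, List.prod_append,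
      List.prod_singleton]
    exact ih.comp (hfg i)

theorem isAdjointPair_alternatingSum [Fintype ι] [DecidableEq ι]
    {F G : (ι → L) → Module.End S M}
    (hFG : ∀ b, LinearMap.IsAdjointPair B B (F b) (G b)) (a : ι → L) :
    LinearMap.IsAdjointPair B B ⇑(alternatingSum F a) ⇑(alternatingSum G a) := fun x y ↦ by
  simp only [alternatingSum, LinearMap.sum_apply, LinearMap.smul_apply, map_sum, map_zsmul,
    hFG _ x y]

theorem isAdjointPair_alternatingSum_blockProd [Fintype κ] [DecidableEq κ]
    (hκ : Even (Fintype.card κ)) {P Q : (κ → L) → Module.End S M}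
    (hPQ : ∀ v, LinearMap.IsAdjointPair B B (P v) (Q v)) (p : ℕ) (a : Fin p × κ → L) :
    LinearMap.IsAdjointPair B B ⇑(alternatingSum (blockProd P p) a)
      ⇑(alternatingSum (blockProd Q p) a) := by
  rw [alternatingSum_blockProd_eq_reverse hκ Q]
  exact isAdjointPair_alternatingSum (fun b ↦ isAdjointPair_list_prod (fun _ ↦ hPQ _) _) a

end Adjoint

theorem trace_eq_of_isAdjointPair {R M : Type*} [CommRing R] [AddCommGroup M] [Module R M]
    [Module.Finite R M] [Module.Free R M] {B : M →ₗ[R] M →ₗ[R] R} (hB : Function.Bijective B)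
    {f g : M →ₗ[R] M} (hfg : LinearMap.IsAdjointPair B B f g) :
    LinearMap.trace R M f = LinearMap.trace R M g := by
  let e : M ≃ₗ[R] Module.Dual R M := LinearEquiv.ofBijective B hB
  have conj_eq : e.conj f = Module.Dual.transpose g := by
    ext φ y
    obtain ⟨x, rfl⟩ := e.surjective φ
    simpa [e, LinearEquiv.conj_apply, Module.Dual.transpose] using hfg x y
  rw [← LinearMap.trace_conj' f e, conj_eq, LinearMap.trace_transpose']

/-- The `R`-algebra of those `R`-linear endomorphisms of `E` that are `C`-linear. -/
def linearEndSubalgebra (R C E : Type*) [CommRing R] [CommRing C] [Algebra R C] [AddCommGroup E]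
    [Module R E] [Module C E] [IsScalarTower R C E] : Subalgebra R (Module.End R E) where
  carrier := Set.range (LinearMap.restrictScalars R : Module.End C E → Module.End R E)
  mul_mem' := by
    rintro _ _ ⟨f, rfl⟩ ⟨g, rfl⟩
    exact ⟨f * g, rfl⟩
  add_mem' := by
    rintro _ _ ⟨f, rfl⟩ ⟨g, rfl⟩
    exact ⟨f + g, rfl⟩
  algebraMap_mem' c := ⟨c • 1, rfl⟩

theorem trR_restrictScalars_s12 {C E : Type*} [CommRing C] [AddCommGroup E] [Module ℝ E] [Module C E]
    [LinearMap.CompatibleSMul E E ℝ C] (A : E →ₗ[C] E) :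
    trR C (A.restrictScalars ℝ) = LinearMap.trace C E A := by
  have exists_linear : ∃ g : E →ₗ[C] E, ⇑g = A.restrictScalars ℝ := ⟨A, rfl⟩
  rw [trR, dif_pos exists_linear, DFunLike.coe_injective exists_linear.choose_spec]

theorem isAdjointPair_wpow {L C E : Type*} [CommRing C] [Algebra ℝ C] [AddCommGroup E]
    [Module ℝ E] [Module C E] [IsScalarTower ℝ C E] {h : E →ₗ[C] E →ₗ[C] C}
    {P Q : (Fin 2 → L) → Module.End ℝ E} (hPQ : ∀ v, LinearMap.IsAdjointPair h h (P v) (Q v))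
    (p : ℕ) (a : Fin (2 * p) → L) :
    LinearMap.IsAdjointPair h h (wpow P p a) (wpow Q p a) := fun x y ↦ by
  have adjoint := isAdjointPair_alternatingSum_blockProd (by decide) hPQ p (a ∘ pairIndex p) x y
  simp only [wpow_eq_smul_alternatingSum, LinearMap.smul_apply, LinearMap.map_smul_of_tower,
    adjoint]

section Connection

variable {L C E : Type*} [LieRing L] [LieAlgebra ℝ L] [CommRing C] [Algebra ℝ C]
  [AddCommGroup E] [Module ℝ E] [Module C E] {ρ : L →ₗ[ℝ] Derivation ℝ C C}
  {D Dh : L →ₗ[ℝ] Module.End ℝ E}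

theorem curv2_mem_linearEndSubalgebra [IsScalarTower ℝ C E]
    (hρ : ∀ (a b : L) (f : C), ρ ⁅a, b⁆ f = ρ a (ρ b f) - ρ b (ρ a f))
    (hD : IsConn ρ D) (v : Fin 2 → L) : curv2 D v ∈ linearEndSubalgebra ℝ C E := by
  refine ⟨{ curv2 D v with map_smul' := fun c e ↦ ?_ }, rfl⟩
  change curv2 D v (c • e) = c • curv2 D v e
  simp only [curv2, curv, LinearMap.sub_apply, Module.End.mul_apply, hD _ _ _, map_add, hρ]
  module

theorem isAdjointPair_curv2
    (hρ : ∀ (a b : L) (f : C), ρ ⁅a, b⁆ f = ρ a (ρ b f) - ρ b (ρ a f))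
    {h : E →ₗ[C] E →ₗ[C] C}
    (hadj : ∀ (a : L) (s t : E), ρ a (h s t) = h (D a s) t + h s (Dh a t)) (v : Fin 2 → L) :
    LinearMap.IsAdjointPair h h (curv2 D v) ((-curv2 Dh) v) := fun s t ↦ by
  have second_derivative (a b : L) : ρ a (ρ b (h s t)) =
      h (D a (D b s)) t + h (D b s) (Dh a t) + (h (D a s) (Dh b t) + h s (Dh a (Dh b t))) := by
    rw [hadj b, map_add, hadj a, hadj a]
  have bracket := hadj ⁅v 0, v 1⁆ s t
  rw [hρ, second_derivative, second_derivative] at bracket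
  simp only [curv2, curv, Pi.neg_apply, LinearMap.neg_apply, LinearMap.sub_apply,
    Module.End.mul_apply, map_sub, map_neg]
  linear_combination bracket

end Connection

theorem stmt12_general {L C E : Type*} [LieRing L] [LieAlgebra ℝ L] [CommRing C] [Algebra ℝ C]
    [AddCommGroup E] [Module ℝ E] [Module C E] [IsScalarTower ℝ C E]
    [Module.Finite C E] [Module.Free C E]
    (ρ : L →ₗ[ℝ] Derivation ℝ C C)
    (hρ : ∀ (a b : L) (f : C), ρ ⁅a, b⁆ f = ρ a (ρ b f) - ρ b (ρ a f))
    (h : E →ₗ[C] E →ₗ[C] C) (hnd : Function.Bijective (⇑h))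
    (D Dh : L →ₗ[ℝ] Module.End ℝ E) (hD : IsConn ρ D) (hDh : IsConn ρ Dh)
    (hadj : ∀ (a : L) (s t : E), ρ a (h s t) = h (D a s) t + h s (Dh a t))
    (p : ℕ) (v : Fin (2 * p) → L) : chp C Dh p v = (-1 : ℤ) ^ p • chp C D p v := by
  obtain ⟨A, hA⟩ := wpow_mem (curv2_mem_linearEndSubalgebra hρ hD) p v
  obtain ⟨Ah, hAh⟩ := wpow_mem (curv2_mem_linearEndSubalgebra hρ hDh) p v
  have adjoint : LinearMap.IsAdjointPair h h A ⇑((-1 : ℤ) ^ p • Ah) := by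
    have := isAdjointPair_wpow (isAdjointPair_curv2 hρ hadj) p v
    rwa [wpow_neg, Pi.smul_apply, ← hA, ← hAh] at this
  calc
    chp C Dh p v = LinearMap.trace C E Ah := by rw [chp, ← hAh, trR_restrictScalars_s12]
    _ = (-1 : ℤ) ^ p • LinearMap.trace C E ((-1 : ℤ) ^ p • Ah) := by
      rw [map_zsmul, smul_smul, ← mul_pow, neg_one_mul, neg_neg, one_pow, one_smul]
    _ = (-1 : ℤ) ^ p • LinearMap.trace C E A := by rw [trace_eq_of_isAdjointPair hnd adjoint]
    _ = (-1 : ℤ) ^ p • chp C D p v := by rw [chp, ← hA, trR_restrictScalars_s12]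

/-- `ch_p(∇^h) = (−1)^p · ch_p(∇)`. -/
theorem stmt12 {L : Type*} {C : Type*} {E : Type*}
    [LieRing L] [LieAlgebra ℝ L] [CommRing C] [Algebra ℝ C] [Module C L]
    [AddCommGroup E] [Module ℝ E] [Module C E] [IsScalarTower ℝ C E]
    [Module.Finite C E] [Module.Free C E]
    (ρ : L →ₗ[ℝ] Derivation ℝ C C)
    (hρ : ∀ (a b : L) (f : C), ρ ⁅a, b⁆ f = ρ a (ρ b f) - ρ b (ρ a f))
    (hLeib : ∀ (a b : L) (f : C), ⁅a, f • b⁆ = f • ⁅a, b⁆ + ρ a f • b)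
    (h : E →ₗ[C] E →ₗ[C] C) (hsymm : ∀ s t : E, h s t = h t s)
    (hnd : Function.Bijective (⇑h))
    (D Dh : L →ₗ[ℝ] Module.End ℝ E) (hD : IsConn ρ D) (hDh : IsConn ρ Dh)
    (hadj : ∀ (a : L) (s t : E), ρ a (h s t) = h (D a s) t + h s (Dh a t))
    (p : ℕ) (hp : 1 ≤ p) :
    ∀ v : Fin (2 * p) → L, chp C Dh p v = (-1 : ℤ) ^ p • chp C D p v := by
  exact stmt12_general ρ hρ h hnd D Dh hD hDh hadj p
end
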